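/- arXiv:math/0409161 — 4 statements merged into one kernel-verified Lean document; each statement's English description precedes it below -/
import Mathlib

section
/- Let Λ be a left and right Noetherian ring, k a positive integer, and 0 → M₁ → M₂ → M₃ → 0 an exact sequence of finitely generated left Λ-modules such that C = Coker(M₂* → M₁*) has grade ≥ k. If M₁ and M₃ are k-torsionfree, then M₂ is k-torsionfree. -/
/-!
Fix a presentation `P₁ → P₀ → M₂` and a presentation `R → Q → M₁`, and lift `ι : M₁ → M₂` to
`h : Q → P₀` and `t : R → P₁`. Then `Q × P₁ → P₀` presents `M₃`, and for the transposes formed from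
these three presentations and `C = Coker (M₂* → M₁*)` there is an exact sequence

`0 → C → Tr M₃ → Tr M₂ × R* → Tr M₁ → 0`

(`cokerToTr_injective`, `exact_cokerToTr_trToProd`, `exact_trToProd_prodToTr`,
`prodToTr_surjective`). The summand `R*` is what allows the presentation of `M₂` to be arbitrary:
no comparison of different transposes of `M₂` is needed.

Let `W` be the image of the middle map and `1 ≤ j ≤ k`. From `Ext^(j-1)(C, Λ) = 0` and
`Ext^j(Tr M₃, Λ) = 0` follows `Ext^j(W, Λ) = 0` (`ext_right`); together with `Ext^j(Tr M₁, Λ) = 0`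
this gives `Ext^j(Tr M₂ × R*, Λ) = 0` (`ext_middle`), hence the claim, `Tr M₂` being a retract of
the product (`ext_fst`). The long exact sequences are those of `Abelian.Ext`, whose vanishing
agrees with that of `extGrp` because both are computed by a projective resolution.
-/

open CategoryTheory

noncomputable section

/-- The `n`-th Ext group of `M` and `N` over `Λ`, as an object of `ModuleCat ℤ`
(computed in the abelian category of `Λ`-modules). -/
def extGrp (Λ : Type) [Ring Λ] (n : ℕ) (M N : ModuleCat Λ) : ModuleCat ℤ :=
  ((_root_.Ext ℤ (ModuleCat Λ) n).obj (Opposite.op M)).obj N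

section Dual

variable (Λ : Type) [Ring Λ]

/-- The canonical evaluation map from a left module to its double dual. -/
def evalL (M : Type) [AddCommGroup M] [Module Λ M] :
    M →ₗ[Λ] ((M →ₗ[Λ] Λ) →ₗ[Λᵐᵒᵖ] Λ) where
  toFun m := { toFun := fun f => f m, map_add' := fun _ _ => rfl, map_smul' := fun _ _ => rfl }
  map_add' m m' := by ext f; simp
  map_smul' a m := by ext f; simp

/-- The canonical evaluation map from a right module to its double dual. -/
def evalR (N : Type) [AddCommGroup N] [Module Λᵐᵒᵖ N] :
    N →ₗ[Λᵐᵒᵖ] ((N →ₗ[Λᵐᵒᵖ] Λ) →ₗ[Λ] Λ) where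
  toFun n := { toFun := fun f => f n, map_add' := fun _ _ => rfl, map_smul' := fun _ _ => rfl }
  map_add' n n' := by ext f; simp
  map_smul' a n := by ext f; simp

variable {Λ}

/-- Dualizing a map of left modules (precomposition on `Hom(-,Λ)`). -/
def dualMap {P Q : Type} [AddCommGroup P] [Module Λ P] [AddCommGroup Q] [Module Λ Q]
    (g : P →ₗ[Λ] Q) : (Q →ₗ[Λ] Λ) →ₗ[Λᵐᵒᵖ] (P →ₗ[Λ] Λ) where
  toFun f := f.comp g
  map_add' _ _ := rfl
  map_smul' _ _ := rfl

/-- Dualizing a map of right modules (precomposition on `Hom(-,Λ)`). -/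
def dualMapR {P Q : Type} [AddCommGroup P] [Module Λᵐᵒᵖ P] [AddCommGroup Q] [Module Λᵐᵒᵖ Q]
    (g : P →ₗ[Λᵐᵒᵖ] Q) : (Q →ₗ[Λᵐᵒᵖ] Λ) →ₗ[Λ] (P →ₗ[Λᵐᵒᵖ] Λ) where
  toFun f := f.comp g
  map_add' _ _ := rfl
  map_smul' _ _ := rfl

end Dual

/-- A projective presentation `P₁ → P₀ → M → 0` by finitely generated projectives. -/
structure Presentation (Λ : Type) [Ring Λ] (M : Type) [AddCommGroup M] [Module Λ M] where
  P₁ : Type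
  P₀ : Type
  [acg₁ : AddCommGroup P₁]
  [acg₀ : AddCommGroup P₀]
  [mod₁ : Module Λ P₁]
  [mod₀ : Module Λ P₀]
  [fin₁ : Module.Finite Λ P₁]
  [fin₀ : Module.Finite Λ P₀]
  [proj₁ : Module.Projective Λ P₁]
  [proj₀ : Module.Projective Λ P₀]
  g : P₁ →ₗ[Λ] P₀
  π : P₀ →ₗ[Λ] M
  surj : Function.Surjective π
  exact : LinearMap.range g = LinearMap.ker π

attribute [instance] Presentation.acg₁ Presentation.acg₀ Presentation.mod₁ Presentation.mod₀
  Presentation.fin₁ Presentation.fin₀ Presentation.proj₁ Presentation.proj₀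

/-- The Auslander transpose `Tr M = Coker(P₀* → P₁*)` attached to a projective
presentation; it is a right `Λ`-module. -/
abbrev Presentation.Tr {Λ : Type} [Ring Λ] {M : Type} [AddCommGroup M] [Module Λ M]
    (pr : Presentation Λ M) : Type :=
  (pr.P₁ →ₗ[Λ] Λ) ⧸ LinearMap.range (dualMap pr.g)

/-- A resolution of a left module by finitely generated projective modules. -/
structure FGProjRes (Λ : Type) [Ring Λ] (M : Type) [AddCommGroup M] [Module Λ M] where
  P : ℕ → Type
  [acg : ∀ n, AddCommGroup (P n)]
  [mod : ∀ n, Module Λ (P n)]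
  [fin : ∀ n, Module.Finite Λ (P n)]
  [proj : ∀ n, Module.Projective Λ (P n)]
  d : ∀ n, P (n + 1) →ₗ[Λ] P n
  π : P 0 →ₗ[Λ] M
  surj : Function.Surjective π
  exact0 : LinearMap.range (d 0) = LinearMap.ker π
  exact : ∀ n, LinearMap.range (d (n + 1)) = LinearMap.ker (d n)

attribute [instance] FGProjRes.acg FGProjRes.mod FGProjRes.fin FGProjRes.proj

/-- Cocycles in degree `t` of the dualized complex `Hom(P•, Λ)`. -/
abbrev FGProjRes.extSub {Λ : Type} [Ring Λ] {M : Type} [AddCommGroup M] [Module Λ M]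
    (R : FGProjRes Λ M) (t : ℕ) : Submodule Λᵐᵒᵖ (R.P t →ₗ[Λ] Λ) :=
  LinearMap.ker (dualMap (R.d t))

/-- Coboundaries in degree `t` of the dualized complex `Hom(P•, Λ)`. -/
def FGProjRes.extBdry {Λ : Type} [Ring Λ] {M : Type} [AddCommGroup M] [Module Λ M]
    (R : FGProjRes Λ M) : (t : ℕ) → Submodule Λᵐᵒᵖ (R.extSub t)
  | 0 => ⊥
  | (t + 1) => (LinearMap.range (dualMap (R.d t))).comap (R.extSub (t + 1)).subtype

/-- `Ext^t_Λ(M, Λ)` computed from the resolution `R`, as a right `Λ`-module. -/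
abbrev FGProjRes.extQ {Λ : Type} [Ring Λ] {M : Type} [AddCommGroup M] [Module Λ M]
    (R : FGProjRes Λ M) (t : ℕ) : Type :=
  @HasQuotient.Quotient _ _ (@Submodule.hasQuotient Λᵐᵒᵖ (R.extSub t) _ _ _) (R.extBdry t)

/-- A resolution of a right module by finitely generated projective modules. -/
structure FGProjResR (Λ : Type) [Ring Λ] (N : Type) [AddCommGroup N] [Module Λᵐᵒᵖ N] where
  P : ℕ → Type
  [acg : ∀ n, AddCommGroup (P n)]
  [mod : ∀ n, Module Λᵐᵒᵖ (P n)]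
  [fin : ∀ n, Module.Finite Λᵐᵒᵖ (P n)]
  [proj : ∀ n, Module.Projective Λᵐᵒᵖ (P n)]
  d : ∀ n, P (n + 1) →ₗ[Λᵐᵒᵖ] P n
  π : P 0 →ₗ[Λᵐᵒᵖ] N
  surj : Function.Surjective π
  exact0 : LinearMap.range (d 0) = LinearMap.ker π
  exact : ∀ n, LinearMap.range (d (n + 1)) = LinearMap.ker (d n)

attribute [instance] FGProjResR.acg FGProjResR.mod FGProjResR.fin FGProjResR.proj

/-- Cocycles in degree `t` of the dualized complex `Hom(P•, Λ)` (right module case). -/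
abbrev FGProjResR.extSub {Λ : Type} [Ring Λ] {N : Type} [AddCommGroup N] [Module Λᵐᵒᵖ N]
    (R : FGProjResR Λ N) (t : ℕ) : Submodule Λ (R.P t →ₗ[Λᵐᵒᵖ] Λ) :=
  LinearMap.ker (dualMapR (R.d t))

/-- Coboundaries in degree `t` of the dualized complex (right module case). -/
def FGProjResR.extBdry {Λ : Type} [Ring Λ] {N : Type} [AddCommGroup N] [Module Λᵐᵒᵖ N]
    (R : FGProjResR Λ N) : (t : ℕ) → Submodule Λ (R.extSub t)
  | 0 => ⊥
  | (t + 1) => (LinearMap.range (dualMapR (R.d t))).comap (R.extSub (t + 1)).subtype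

/-- `Ext^t_{Λᵒᵖ}(N, Λ)` computed from the resolution `R`, as a left `Λ`-module. -/
abbrev FGProjResR.extQ {Λ : Type} [Ring Λ] {N : Type} [AddCommGroup N] [Module Λᵐᵒᵖ N]
    (R : FGProjResR Λ N) (t : ℕ) : Type :=
  @HasQuotient.Quotient _ _ (@Submodule.hasQuotient Λ (R.extSub t) _ _ _) (R.extBdry t)

/-- `pd_Λ M ≤ n`, via the standard characterization `Ext^{n+1}(M, -) = 0`. -/
def pdLE (Λ : Type) [Ring Λ] (M : ModuleCat Λ) (n : ℕ) : Prop :=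
  ∀ N : ModuleCat Λ, Subsingleton (extGrp Λ (n + 1) M N)

/-- `id_Λ Λ ≤ n` (left self-injective dimension), via `Ext^{n+1}(-, Λ) = 0`. -/
def idLambdaLE (Λ : Type) [Ring Λ] (n : ℕ) : Prop :=
  ∀ N : ModuleCat Λ, Subsingleton (extGrp Λ (n + 1) N (ModuleCat.of Λ Λ))

/-- `id_{Λᵒᵖ} Λ ≤ n` (right self-injective dimension). -/
def idLambdaOpLE (Λ : Type) [Ring Λ] (n : ℕ) : Prop :=
  ∀ N : ModuleCat Λᵐᵒᵖ, Subsingleton (extGrp Λᵐᵒᵖ (n + 1) N (ModuleCat.of Λᵐᵒᵖ Λ))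

/-- `Λ` is `m`-Gorenstein, via Auslander's characterization:
`s.grade Ext^i_Λ(M, Λ) ≥ i` for every finitely generated left `Λ`-module `M`
and all `1 ≤ i ≤ m` ([FGR, Theorem 3.7]). -/
def IsGorensteinLE (Λ : Type) [Ring Λ] (m : ℕ) : Prop :=
  ∀ (M : Type) [AddCommGroup M] [Module Λ M] [Module.Finite Λ M] (R : FGProjRes Λ M)
    (i : ℕ), 1 ≤ i → i ≤ m → ∀ X : Submodule Λᵐᵒᵖ (R.extQ i), ∀ j < i,
      Subsingleton (extGrp Λᵐᵒᵖ j (ModuleCat.of Λᵐᵒᵖ X) (ModuleCat.of Λᵐᵒᵖ Λ))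

/-- `Λ` is left quasi `∞`-Gorenstein: `grade Ext^i_Λ(M, Λ) ≥ i` for every finitely
generated left `Λ`-module `M` and all `i ≥ 1`. -/
def LeftQuasiInfGorenstein (Λ : Type) [Ring Λ] : Prop :=
  ∀ (M : Type) [AddCommGroup M] [Module Λ M] [Module.Finite Λ M] (R : FGProjRes Λ M)
    (i : ℕ), 1 ≤ i → ∀ j < i,
      Subsingleton (extGrp Λᵐᵒᵖ j (ModuleCat.of Λᵐᵒᵖ (R.extQ i)) (ModuleCat.of Λᵐᵒᵖ Λ))

/-- `M` is pseudo-null, i.e. `s.grade M ≥ 2`: every submodule of `M` has grade at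
least `2` (equivalently `Hom_Λ(M, I'₀ ⊕ I'₁) = 0`, by [CSS, Lemma 1.1]). -/
def IsPseudoNull (Λ : Type) [Ring Λ] (M : Type) [AddCommGroup M] [Module Λ M] : Prop :=
  ∀ X : Submodule Λ M, ∀ j < 2,
    Subsingleton (extGrp Λ j (ModuleCat.of Λ X) (ModuleCat.of Λ Λ))

/-- `M` is `k`-torsionfree: `Ext^j_{Λᵒᵖ}(Tr M, Λ) = 0` for all `1 ≤ j ≤ k`. -/
def KTorsionfree (Λ : Type) [Ring Λ] (k : ℕ) (M : Type) [AddCommGroup M] [Module Λ M] : Prop :=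
  ∀ pr : Presentation Λ M, ∀ j, 1 ≤ j → j ≤ k →
    Subsingleton (extGrp Λᵐᵒᵖ j (ModuleCat.of Λᵐᵒᵖ pr.Tr) (ModuleCat.of Λᵐᵒᵖ Λ))

end

/-! ### Vanishing of Ext groups -/

/-- `extGrp` is computed by any projective resolution: it vanishes in degree `n` if and only if
every `n`-cocycle is a coboundary. For `n = 0` the index `i` is `0` as well, and the differential
`R.complex.d 0 0` is the zero map. -/
theorem extGrp_subsingleton_iff {S : Type} [Ring S] {M : ModuleCat.{0} S} (N : ModuleCat.{0} S)
    (R : ProjectiveResolution M) (i n : ℕ) (hi : (ComplexShape.up ℕ).prev n = i) :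
    Subsingleton (extGrp S n M N) ↔ ∀ f : R.complex.X n ⟶ N, R.complex.d (n + 1) n ≫ f = 0 →
      ∃ g : R.complex.X i ⟶ N, R.complex.d n i ≫ g = f := by
  rw [extGrp, ← ModuleCat.isZero_iff_subsingleton, (R.isoExt (R := ℤ) n N).isZero_iff,
    ← HomologicalComplex.exactAt_iff_isZero_homology,
    HomologicalComplex.exactAt_iff' _ i n (n + 1) hi (by simp), ShortComplex.moduleCat_exact_iff]
  rfl

/-- Vanishing transfers from the derived-functor `extGrp` to Mathlib's `Abelian.Ext`, for which the
long exact sequences are available. -/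
theorem subsingleton_ext_of_extGrp {S : Type} [Ring S] {M N : ModuleCat.{0} S} {n : ℕ}
    (h : Subsingleton (extGrp S n M N)) : Subsingleton (Abelian.Ext M N n) := by
  have R : ProjectiveResolution M := projectiveResolution M
  refine subsingleton_of_forall_eq 0 fun α => ?_
  obtain ⟨f, hf, rfl⟩ := R.extMk_surjective α (n + 1) rfl
  cases n with
  | zero =>
    obtain ⟨g, rfl⟩ := (extGrp_subsingleton_iff N R 0 0 (by simp)).1 h f hf
    simp
  | succ p =>
    rw [R.extMk_eq_zero_iff _ _ _ _ p rfl]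
    exact (extGrp_subsingleton_iff N R p (p + 1) (by simp)).1 h f hf

theorem subsingleton_extGrp_of_ext {S : Type} [Ring S] {M N : ModuleCat.{0} S} {n : ℕ}
    (hn : 1 ≤ n) (h : Subsingleton (Abelian.Ext M N n)) : Subsingleton (extGrp S n M N) := by
  have R : ProjectiveResolution M := projectiveResolution M
  obtain ⟨p, rfl⟩ := Nat.exists_eq_add_of_le' hn
  rw [extGrp_subsingleton_iff N R p (p + 1) (by simp)]
  intro f hf
  exact (R.extMk_eq_zero_iff f _ rfl hf p rfl).1 (Subsingleton.elim _ _)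

section LongExact

variable {S : Type} [Ring S] {A B C : Type} [AddCommGroup A] [Module S A] [AddCommGroup B]
  [Module S B] [AddCommGroup C] [Module S C]

theorem ext_middle (f : A →ₗ[S] B) (g : B →ₗ[S] C) (hf : Function.Injective f)
    (hg : Function.Surjective g) (hfg : Function.Exact f g) (N : ModuleCat.{0} S) (j : ℕ)
    (hA : Subsingleton (Abelian.Ext (ModuleCat.of S A) N j))
    (hC : Subsingleton (Abelian.Ext (ModuleCat.of S C) N j)) :
    Subsingleton (Abelian.Ext (ModuleCat.of S B) N j) := by
  have hS := ModuleCat.shortComplex_shortExact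
    (ModuleCat.shortComplexOfCompEqZero f g hfg.linearMap_comp_eq_zero) hfg hf hg
  refine subsingleton_of_forall_eq 0 fun x => ?_
  obtain ⟨y, rfl⟩ := Abelian.Ext.contravariant_sequence_exact₂ hS N x
    (Subsingleton.elim (α := Abelian.Ext (ModuleCat.of S A) N j) _ _)
  obtain rfl : y = 0 := Subsingleton.elim (α := Abelian.Ext (ModuleCat.of S C) N j) _ _
  simp

theorem ext_right (f : A →ₗ[S] B) (g : B →ₗ[S] C) (hf : Function.Injective f)
    (hg : Function.Surjective g) (hfg : Function.Exact f g) (N : ModuleCat.{0} S) (j : ℕ)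
    (hA : Subsingleton (Abelian.Ext (ModuleCat.of S A) N j))
    (hB : Subsingleton (Abelian.Ext (ModuleCat.of S B) N (j + 1))) :
    Subsingleton (Abelian.Ext (ModuleCat.of S C) N (j + 1)) := by
  have hS := ModuleCat.shortComplex_shortExact
    (ModuleCat.shortComplexOfCompEqZero f g hfg.linearMap_comp_eq_zero) hfg hf hg
  refine subsingleton_of_forall_eq 0 fun x => ?_
  obtain ⟨y, rfl⟩ := Abelian.Ext.contravariant_sequence_exact₃ hS N x
    (Subsingleton.elim (α := Abelian.Ext (ModuleCat.of S B) N (j + 1)) _ _)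
    (add_comm 1 j)
  obtain rfl : y = 0 := Subsingleton.elim (α := Abelian.Ext (ModuleCat.of S A) N j) _ _
  simp

/-- Ext out of a product vanishes only if Ext out of the first factor does, the latter being a
retract of the product. -/
theorem ext_fst (N : ModuleCat.{0} S) (j : ℕ)
    (h : Subsingleton (Abelian.Ext (ModuleCat.of S (A × B)) N j)) :
    Subsingleton (Abelian.Ext (ModuleCat.of S A) N j) := by
  refine subsingleton_of_forall_eq 0 fun x => ?_
  have h1 : ModuleCat.ofHom (LinearMap.inl S A B) ≫ ModuleCat.ofHom (LinearMap.fst S A B)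
      = 𝟙 (ModuleCat.of S A) := rfl
  rw [← Abelian.Ext.mk₀_id_comp x, ← h1, ← Abelian.Ext.mk₀_comp_mk₀_assoc,
    Subsingleton.elim ((Abelian.Ext.mk₀ (ModuleCat.ofHom (LinearMap.fst S A B))).comp x
      (zero_add j)) 0, Abelian.Ext.comp_zero]

end LongExact

/-! ### Comparison of the transposes -/

section Transpose

-- Below, `P₁ → P₀ → M₂` and `R → Q → M₁` are presentations, `h : Q → P₀` and `t : R → P₁` lift
-- `ι`, and `M₃` is the cokernel of `(h, g) : Q × P₁ → P₀`.
variable {Λ : Type} [Ring Λ] {M₁ M₂ : Type} [AddCommGroup M₁] [Module Λ M₁]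
  [AddCommGroup M₂] [Module Λ M₂] {Q R P₁ P₀ : Type} [AddCommGroup Q] [Module Λ Q]
  [AddCommGroup R] [Module Λ R] [AddCommGroup P₁] [Module Λ P₁] [AddCommGroup P₀] [Module Λ P₀]

/-- A functional on `P₀` killed by `g : P₁ → P₀` descends to the cokernel `M₂` of `g`. -/
theorem exists_factor {g : P₁ →ₗ[Λ] P₀} {π : P₀ →ₗ[Λ] M₂} (hπ : Function.Surjective π)
    (hgπ : LinearMap.range g = LinearMap.ker π) (u : P₀ →ₗ[Λ] Λ) (hu : u ∘ₗ g = 0) :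
    ∃ v : M₂ →ₗ[Λ] Λ, v ∘ₗ π = u := by
  have hle : LinearMap.ker π ≤ LinearMap.ker u := by
    rw [← hgπ]; exact LinearMap.range_le_ker_iff.2 hu
  refine ⟨(LinearMap.ker π).liftQ u hle ∘ₗ (π.quotKerEquivOfSurjective hπ).symm, ?_⟩
  ext x
  have : (π.quotKerEquivOfSurjective hπ).symm (π x) = Submodule.Quotient.mk x := by
    rw [LinearEquiv.symm_apply_eq]; rfl
  simp [this]

variable (ι : M₁ →ₗ[Λ] M₂) (π₁ : Q →ₗ[Λ] M₁) (s : R →ₗ[Λ] Q) (g : P₁ →ₗ[Λ] P₀)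
  (π : P₀ →ₗ[Λ] M₂) (h : Q →ₗ[Λ] P₀) (t : R →ₗ[Λ] P₁)

/-- The map `C → Tr M₃` from the cokernel of `M₂* → M₁*`, induced by `M₁* → Q* → (Q × P₁)*`. -/
def cokerToTr (hh : π ∘ₗ h = ι ∘ₗ π₁) (hπg : π ∘ₗ g = 0) :
    ((M₁ →ₗ[Λ] Λ) ⧸ LinearMap.range (dualMap ι)) →ₗ[Λᵐᵒᵖ]
      ((Q × P₁ →ₗ[Λ] Λ) ⧸ LinearMap.range (dualMap (h.coprod g))) :=
  Submodule.mapQ _ _ (dualMap (π₁ ∘ₗ LinearMap.fst Λ Q P₁)) (by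
    rintro _ ⟨v, rfl⟩
    refine ⟨v ∘ₗ π, ?_⟩
    change (v ∘ₗ π) ∘ₗ h.coprod g = (v ∘ₗ ι) ∘ₗ π₁ ∘ₗ LinearMap.fst Λ Q P₁
    rw [LinearMap.comp_assoc, LinearMap.comp_coprod, hh, hπg]
    ext <;> simp)

/-- The map `Tr M₃ → Tr M₂ × R*` sending the class of `φ : Q × P₁ → Λ` to the class of its
restriction to `P₁` together with `φ ∘ (s, -t)`. -/
def trToProd (ht : g ∘ₗ t = h ∘ₗ s) :
    ((Q × P₁ →ₗ[Λ] Λ) ⧸ LinearMap.range (dualMap (h.coprod g))) →ₗ[Λᵐᵒᵖ]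
      ((P₁ →ₗ[Λ] Λ) ⧸ LinearMap.range (dualMap g)) × (R →ₗ[Λ] Λ) :=
  Submodule.liftQ _
    (((LinearMap.range (dualMap g)).mkQ ∘ₗ dualMap (LinearMap.inr Λ Q P₁)).prod
      (dualMap (s.prod (-t)))) (by
    rintro _ ⟨u, rfl⟩
    rw [LinearMap.mem_ker]
    refine Prod.ext ?_ ?_
    · refine (Submodule.Quotient.mk_eq_zero _).2 ⟨u, ?_⟩
      change u ∘ₗ g = (u ∘ₗ h.coprod g) ∘ₗ LinearMap.inr Λ Q P₁
      ext; simp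
    · change (u ∘ₗ h.coprod g) ∘ₗ s.prod (-t) = 0
      ext x
      have e : u (g (t x)) = u (h (s x)) := congrArg u (LinearMap.congr_fun ht x)
      simp [e])

/-- The map `Tr M₂ × R* → Tr M₁` sending `([b], r)` to `[r + b ∘ t]`. -/
def prodToTr (ht : g ∘ₗ t = h ∘ₗ s) :
    ((P₁ →ₗ[Λ] Λ) ⧸ LinearMap.range (dualMap g)) × (R →ₗ[Λ] Λ) →ₗ[Λᵐᵒᵖ]
      ((R →ₗ[Λ] Λ) ⧸ LinearMap.range (dualMap s)) :=
  (Submodule.mapQ _ _ (dualMap t) (by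
    rintro _ ⟨u, rfl⟩
    refine ⟨u ∘ₗ h, ?_⟩
    change (u ∘ₗ h) ∘ₗ s = (u ∘ₗ g) ∘ₗ t
    rw [LinearMap.comp_assoc, LinearMap.comp_assoc, ht])).coprod
    (LinearMap.range (dualMap s)).mkQ

variable {ι π₁ s g π h t}

theorem cokerToTr_injective (hπ₁ : Function.Surjective π₁) (hπ : Function.Surjective π)
    (hgπ : LinearMap.range g = LinearMap.ker π)
    (hh : π ∘ₗ h = ι ∘ₗ π₁) (hπg : π ∘ₗ g = 0) :
    Function.Injective (cokerToTr ι π₁ g π h hh hπg) := by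
  rw [injective_iff_map_eq_zero]
  intro x hx
  obtain ⟨α, rfl⟩ := Submodule.Quotient.mk_surjective _ x
  obtain ⟨u, hu⟩ := (Submodule.Quotient.mk_eq_zero _).1 hx
  replace hu : u ∘ₗ h.coprod g = α ∘ₗ π₁ ∘ₗ LinearMap.fst Λ Q P₁ := hu
  obtain ⟨v, rfl⟩ := exists_factor hπ hgπ u (by
    ext y
    simpa using LinearMap.congr_fun hu (0, y))
  refine (Submodule.Quotient.mk_eq_zero _).2 ⟨v, ?_⟩
  change v ∘ₗ ι = α
  ext m
  obtain ⟨q, rfl⟩ := hπ₁ m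
  have h1 := LinearMap.congr_fun hu (q, 0)
  have h2 := LinearMap.congr_fun hh q
  simp only [LinearMap.comp_apply] at h2
  simpa [h2] using h1

theorem exact_cokerToTr_trToProd (hπ₁ : Function.Surjective π₁)
    (hsπ : LinearMap.range s = LinearMap.ker π₁)
    (hh : π ∘ₗ h = ι ∘ₗ π₁) (hπg : π ∘ₗ g = 0) (ht : g ∘ₗ t = h ∘ₗ s) :
    Function.Exact (cokerToTr ι π₁ g π h hh hπg) (trToProd s g h t ht) := by
  intro x
  constructor
  · obtain ⟨φ, rfl⟩ := Submodule.Quotient.mk_surjective _ x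
    intro hx
    obtain ⟨u, hu⟩ := (Submodule.Quotient.mk_eq_zero _).1 (congrArg Prod.fst hx)
    replace hu : u ∘ₗ g = φ ∘ₗ LinearMap.inr Λ Q P₁ := hu
    have hst : φ ∘ₗ s.prod (-t) = 0 := congrArg Prod.snd hx
    -- Subtracting the coboundary of `u` makes `φ` vanish on `P₁`.
    obtain ⟨α, hα⟩ := exists_factor hπ₁ hsπ (φ ∘ₗ LinearMap.inl Λ Q P₁ - u ∘ₗ h) (by
      ext r
      have h1 := LinearMap.congr_fun hst r
      have h2 := LinearMap.congr_fun hu (t r)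
      have h3 := LinearMap.congr_fun ht r
      have h4 : φ (s r, -t r) = φ (s r, 0) - φ (0, t r) := by
        rw [← map_sub]; simp
      simp only [LinearMap.comp_apply, LinearMap.inr_apply] at h2 h3
      simp only [LinearMap.comp_apply, LinearMap.prod_apply, Function.prod, LinearMap.neg_apply, h4,
        LinearMap.zero_apply, ← h2, h3] at h1
      simpa using h1)
    refine ⟨Submodule.Quotient.mk α, ?_⟩
    refine (Submodule.Quotient.eq _).2 ⟨-u, ?_⟩
    change (-u) ∘ₗ h.coprod g = α ∘ₗ π₁ ∘ₗ LinearMap.fst Λ Q P₁ - φ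
    ext y
    · have h1 := LinearMap.congr_fun hα y
      simp only [LinearMap.comp_apply] at h1
      simp [h1]
    · have h2 := LinearMap.congr_fun hu y
      simpa using h2
  · rintro ⟨y, rfl⟩
    obtain ⟨α, rfl⟩ := Submodule.Quotient.mk_surjective _ y
    refine Prod.ext ?_ ?_
    · refine (Submodule.Quotient.mk_eq_zero _).2 ⟨0, ?_⟩
      change (0 : P₀ →ₗ[Λ] Λ) ∘ₗ g = (α ∘ₗ π₁ ∘ₗ LinearMap.fst Λ Q P₁) ∘ₗ LinearMap.inr Λ Q P₁
      ext; simp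
    · change (α ∘ₗ π₁ ∘ₗ LinearMap.fst Λ Q P₁) ∘ₗ s.prod (-t) = 0
      ext r
      have : π₁ (s r) = 0 := hsπ.le ⟨r, rfl⟩
      simp [this]

theorem exact_trToProd_prodToTr (ht : g ∘ₗ t = h ∘ₗ s) :
    Function.Exact (trToProd s g h t ht) (prodToTr s g h t ht) := by
  rintro ⟨x, r⟩
  obtain ⟨b, rfl⟩ := Submodule.Quotient.mk_surjective _ x
  constructor
  · intro hx
    obtain ⟨a, ha⟩ := (Submodule.Quotient.mk_eq_zero (LinearMap.range (dualMap s))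
      (x := b ∘ₗ t + r)).1 hx
    replace ha : a ∘ₗ s = b ∘ₗ t + r := ha
    refine ⟨Submodule.Quotient.mk (a.coprod b), ?_⟩
    refine Prod.ext ?_ ?_
    · refine congrArg Submodule.Quotient.mk (?_ : a.coprod b ∘ₗ LinearMap.inr Λ Q P₁ = b)
      ext; simp
    · change a.coprod b ∘ₗ s.prod (-t) = r
      ext y
      have := LinearMap.congr_fun ha y
      simp only [LinearMap.comp_apply, LinearMap.add_apply] at this
      simp [this]
  · rintro ⟨y, hy⟩
    rw [← hy]
    obtain ⟨φ, rfl⟩ := Submodule.Quotient.mk_surjective _ y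
    refine (Submodule.Quotient.mk_eq_zero (LinearMap.range (dualMap s))
      (x := (φ ∘ₗ LinearMap.inr Λ Q P₁) ∘ₗ t + φ ∘ₗ s.prod (-t))).2
      ⟨φ ∘ₗ LinearMap.inl Λ Q P₁, ?_⟩
    change (φ ∘ₗ LinearMap.inl Λ Q P₁) ∘ₗ s = _
    ext y
    simp [← map_add]

theorem prodToTr_surjective (ht : g ∘ₗ t = h ∘ₗ s) :
    Function.Surjective (prodToTr s g h t ht) := by
  intro x
  obtain ⟨r, rfl⟩ := Submodule.Quotient.mk_surjective _ x
  exact ⟨(0, r), by simp [prodToTr]⟩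

end Transpose

/-! ### Extensions of torsionfree modules -/

/-- If `grade (Coker (M₂* → M₁*)) ≥ k` and `M₁`, `M₃` are `k`-torsionfree, then so is
`M₂`. -/
theorem stmt_15 (Λ : Type) [Ring Λ] [IsNoetherianRing Λ] [IsNoetherianRing Λᵐᵒᵖ] (k : ℕ) (hk : 1 ≤ k)
    (M₁ M₂ M₃ : Type) [AddCommGroup M₁] [Module Λ M₁] [Module.Finite Λ M₁]
    [AddCommGroup M₂] [Module Λ M₂] [Module.Finite Λ M₂]
    [AddCommGroup M₃] [Module Λ M₃] [Module.Finite Λ M₃]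
    (ι : M₁ →ₗ[Λ] M₂) (p : M₂ →ₗ[Λ] M₃)
    (hι : Function.Injective ι) (hp : Function.Surjective p)
    (hex : LinearMap.range ι = LinearMap.ker p)
    (hC : ∀ j < k, Subsingleton (extGrp Λᵐᵒᵖ j
      (ModuleCat.of Λᵐᵒᵖ ((M₁ →ₗ[Λ] Λ) ⧸ LinearMap.range (dualMap ι)))
      (ModuleCat.of Λᵐᵒᵖ Λ)))
    (h1 : KTorsionfree Λ k M₁) (h3 : KTorsionfree Λ k M₃) :
    KTorsionfree Λ k M₂ := by
  intro pr j hj hjk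
  obtain ⟨n, π₁, hπ₁⟩ := Module.Finite.exists_fin' Λ M₁
  obtain ⟨m, s₀, hs₀⟩ := Module.Finite.exists_fin' Λ (LinearMap.ker π₁)
  let s : (Fin m → Λ) →ₗ[Λ] (Fin n → Λ) := (LinearMap.ker π₁).subtype ∘ₗ s₀
  have hs : LinearMap.range s = LinearMap.ker π₁ := by
    rw [LinearMap.range_comp, LinearMap.range_eq_top.2 hs₀, Submodule.map_top,
      Submodule.range_subtype]
  obtain ⟨h, hh⟩ := Module.projective_lifting_property pr.π (ι ∘ₗ π₁) pr.surj
  have hπg : pr.π ∘ₗ pr.g = 0 := LinearMap.range_le_ker_iff.1 pr.exact.le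
  -- `h ∘ s` takes values in `ker pr.π = range pr.g`, hence lifts along `pr.g`.
  have hhs : ∀ r, (h ∘ₗ s) r ∈ LinearMap.range pr.g := by
    intro r
    have h1 : π₁ (s r) = 0 := hs.le ⟨r, rfl⟩
    have h2 := LinearMap.congr_fun hh (s r)
    rw [pr.exact]
    simpa [h1] using h2
  obtain ⟨t, ht'⟩ := Module.projective_lifting_property pr.g.rangeRestrict
    ((h ∘ₗ s).codRestrict _ hhs) pr.g.surjective_rangeRestrict
  have ht : pr.g ∘ₗ t = h ∘ₗ s :=
    LinearMap.ext fun r => congrArg Subtype.val (LinearMap.congr_fun ht' r)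
  let pr₁ : Presentation Λ M₁ :=
    { P₁ := Fin m → Λ, P₀ := Fin n → Λ, g := s, π := π₁, surj := hπ₁, exact := hs }
  -- Killing the image of `M₁` in `M₂` amounts to adding its generators to the relations `pr.P₁`.
  let pr₃ : Presentation Λ M₃ :=
    { P₁ := (Fin n → Λ) × pr.P₁
      P₀ := pr.P₀
      g := h.coprod pr.g
      π := p ∘ₗ pr.π
      surj := hp.comp pr.surj
      exact := by
        apply le_antisymm
        · rw [LinearMap.range_le_ker_iff, LinearMap.comp_assoc, LinearMap.comp_coprod, hh, hπg]
          have : p ∘ₗ ι = 0 := LinearMap.range_le_ker_iff.1 hex.le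
          rw [LinearMap.comp_coprod, ← LinearMap.comp_assoc, this]
          ext <;> simp
        · intro x hx
          obtain ⟨y, hy⟩ := hex.ge hx
          obtain ⟨q, rfl⟩ := hπ₁ y
          have h2 : pr.π (h q) = ι (π₁ q) := LinearMap.congr_fun hh q
          have h3 : x - h q ∈ LinearMap.range pr.g := by
            rw [pr.exact, LinearMap.mem_ker, map_sub, h2, hy, sub_self]
          obtain ⟨y, hy⟩ := h3
          exact ⟨(q, y), by simp [hy]⟩ }
  obtain ⟨i, rfl⟩ := Nat.exists_eq_add_of_le' hj
  refine subsingleton_extGrp_of_ext hj (ext_fst (B := (Fin m → Λ) →ₗ[Λ] Λ) _ _ ?_)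
  let Φ := trToProd s pr.g h t ht
  -- Split the four-term exact sequence at the image of `Φ`.
  let incl := (LinearMap.range Φ).subtype
  have hincl : Function.Injective incl := Subtype.val_injective
  have hexact : Function.Exact incl (prodToTr s pr.g h t ht) := by
    rw [LinearMap.exact_iff, Submodule.range_subtype]
    exact (exact_trToProd_prodToTr ht).linearMap_ker_eq
  have hR : Subsingleton (Abelian.Ext (ModuleCat.of Λᵐᵒᵖ (LinearMap.range Φ))
      (ModuleCat.of Λᵐᵒᵖ Λ) (i + 1)) := by
    refine ext_right (cokerToTr ι π₁ pr.g pr.π h hh hπg) Φ.rangeRestrict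
      (cokerToTr_injective hπ₁ pr.surj pr.exact hh hπg) Φ.surjective_rangeRestrict ?_ _ _
      (subsingleton_ext_of_extGrp (hC i (by omega)))
      (subsingleton_ext_of_extGrp (h3 pr₃ _ hj hjk))
    rw [LinearMap.exact_iff, LinearMap.ker_rangeRestrict]
    exact (exact_cokerToTr_trToProd hπ₁ hs hh hπg ht).linearMap_ker_eq
  exact ext_middle incl (prodToTr s pr.g h t ht) hincl (prodToTr_surjective ht) hexact
    (ModuleCat.of Λᵐᵒᵖ Λ) (i + 1) hR
    (subsingleton_ext_of_extGrp (h1 pr₁ _ hj hjk))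
end

section
/- Let Λ be a 2-Gorenstein left and right Noetherian ring. A non-zero proper left ideal I of Λ is reflexive if and only if Λ/I has no non-zero pseudo-null submodule. -/
/-!
Write `M*` for `Hom(M, Λ)`. The hypothesis on `Λ` says that all submodules of `Extⁱ(M, Λ)` have
grade at least `i`, for `i = 1, 2` and `M` finitely generated.

If `I` is reflexive and `K ⧸ I` is pseudo-null, then restriction `K* → I*` is bijective, because its
kernel is `Hom(K ⧸ I, Λ)` and the obstruction to extending functionals lies in `Ext¹(K ⧸ I, Λ)`.
Hence every `x ∈ K` defines an element of `I**`, namely evaluation at `x` of the extensions to `K`.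
It is evaluation at some `i ∈ I`, and applying it to the inclusion `I → Λ` gives `x = i`; so
`K = I` (`eq_bot_of_isPseudoNull`).

Conversely, `I** → Λ** = Λ` is injective, its kernel being the dual of `Ext¹(Λ ⧸ I, Λ)`
(`bidualToRing_injective`). So `I**` is a left ideal containing `I`, and it suffices that `I** ⧸ I`
is pseudo-null (`isPseudoNull_bidual_quotient`): then it is zero and `I` is reflexive. Let
`I ≤ K ≤ I**` and `Y = K ⧸ I`.

* `Hom(Y, Λ) = 0`: a functional on `K` differs from right multiplications by a class in
  `Ext¹(Λ ⧸ K, Λ)`, and right multiplications vanishing on `I` vanish on `I**`. The grade condition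
  for `i = 1` makes functionals on `K` vanishing on `I` zero (`eq_zero_of_vanish_on`).
* `Ext¹(Y, Λ) = 0`: every functional on `I` extends to `I**`, so `Ext¹(Y, Λ)` embeds into
  `Ext¹(K, Λ) = Ext²(Λ ⧸ K, Λ)`. Let `A` be the annihilator of a class `ξ`. The grade condition for
  `i = 2`, applied to `ξΛ ≅ Λ ⧸ A`, says that `Λ → Hom(A, Λ)` is bijective. If `φ : ker p → Λ`
  represents `ξ`, for `p : F → Y` surjective with `F` projective, each `φ a` with `a ∈ A` has a
  unique extension `Φ a : F → Λ`; for `v ∈ F` the right linear map `a ↦ Φ a v` is left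
  multiplication by a unique `y v`, and `y` extends `φ`, so `ξ = 0` (`extGrp_one_subquotient`).

The vanishing of `Ext⁰` and `Ext¹` enters only through the vanishing of functionals and the
extension of functionals from the kernel of a surjection.
-/

open CategoryTheory

/-! ### Vanishing of `Ext⁰` and `Ext¹` in terms of homomorphisms -/

section ExtBridge

open Limits

variable {S : Type} [Ring S]

theorem exists_factor_of_surjective {X B N : Type} [AddCommGroup X] [Module S X]
    [AddCommGroup B] [Module S B] [AddCommGroup N] [Module S N]
    (Φ : X →ₗ[S] B) (Ψ : X →ₗ[S] N) (hs : Function.Surjective Φ)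
    (hk : ∀ x, Φ x = 0 → Ψ x = 0) : ∃ g : B →ₗ[S] N, ∀ x, g (Φ x) = Ψ x := by
  refine ⟨((LinearMap.ker Φ).liftQ Ψ hk).comp
    (Φ.quotKerEquivOfSurjective hs).symm.toLinearMap, fun x => ?_⟩
  have : (Φ.quotKerEquivOfSurjective hs).symm (Φ x) = (LinearMap.ker Φ).mkQ x := by
    rw [LinearEquiv.symm_apply_eq]; rfl
  rw [LinearMap.comp_apply, LinearEquiv.coe_coe, this]
  rfl

/-- `Ext⁰(M, N) = 0` iff the only `0`-cocycle on a given projective resolution is `0`. -/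
theorem extGrp_zero_iff_res (M N : ModuleCat S) (P : ProjectiveResolution M) :
    Subsingleton (extGrp S 0 M N) ↔
      ∀ f : P.complex.X 0 ⟶ N, P.complex.d 1 0 ≫ f = 0 → f = 0 := by
  have h1 : Subsingleton (extGrp S 0 M N) ↔ (P.complex.linearYonedaObj ℤ N).ExactAt 0 := by
    rw [HomologicalComplex.exactAt_iff_isZero_homology, ← (P.isoExt 0 N).isZero_iff]
    exact (ModuleCat.isZero_iff_subsingleton).symm
  rw [h1, HomologicalComplex.exactAt_iff' _ 0 0 1 (by simp) (by simp),
    ShortComplex.moduleCat_exact_iff]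
  have hd : P.complex.d 0 0 = 0 := P.complex.shape 0 0 (by simp)
  constructor
  · intro h f hf
    obtain ⟨y, hy⟩ := h f hf
    change P.complex.d 0 0 ≫ (y : P.complex.X 0 ⟶ N) = f at hy
    rw [← hy, hd]
    exact zero_comp
  · intro h f hf
    refine ⟨(0 : P.complex.X 0 ⟶ N), ?_⟩
    exact (comp_zero (f := P.complex.d 0 0)).trans (h f hf).symm

/-- `Ext¹(M, N) = 0` iff every `1`-cocycle on a given projective resolution is a coboundary. -/
theorem extGrp_one_iff_res (M N : ModuleCat S) (P : ProjectiveResolution M) :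
    Subsingleton (extGrp S 1 M N) ↔
      ∀ f : P.complex.X 1 ⟶ N, P.complex.d 2 1 ≫ f = 0 →
        ∃ g : P.complex.X 0 ⟶ N, P.complex.d 1 0 ≫ g = f := by
  have h1 : Subsingleton (extGrp S 1 M N) ↔ (P.complex.linearYonedaObj ℤ N).ExactAt 1 := by
    rw [HomologicalComplex.exactAt_iff_isZero_homology, ← (P.isoExt 1 N).isZero_iff]
    exact (ModuleCat.isZero_iff_subsingleton).symm
  rw [h1, HomologicalComplex.exactAt_iff' _ 0 1 2 (by simp) (by simp),
    ShortComplex.moduleCat_exact_iff]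
  exact Iff.rfl

/-- The augmentation of a projective resolution of modules, as a linear map. -/
noncomputable def augMap {M : ModuleCat S} (P : ProjectiveResolution M) : P.complex.X 0 →ₗ[S] M :=
  (P.π.f 0).hom

theorem augMap_surjective {M : ModuleCat S} (P : ProjectiveResolution M) :
    Function.Surjective (augMap P) :=
  (ModuleCat.epi_iff_surjective (P.π.f 0)).1 inferInstance

theorem augMap_eq_zero_iff {M : ModuleCat S} (P : ProjectiveResolution M) (x : P.complex.X 0) :
    augMap P x = 0 ↔ ∃ y, (P.complex.d 1 0).hom y = x := by
  have h := ShortComplex.exact_of_g_is_cokernel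
    (ShortComplex.mk _ _ P.complex_d_comp_π_f_zero) P.isColimitCokernelCofork
  rw [ShortComplex.moduleCat_exact_iff] at h
  constructor
  · exact h x
  · rintro ⟨y, rfl⟩
    exact (ShortComplex.mk _ _ P.complex_d_comp_π_f_zero).moduleCat_zero_apply y

/-- `Ext⁰(M, N) = 0` iff `Hom(M, N) = 0`. -/
theorem extGrp_zero_iff (M N : Type) [AddCommGroup M] [Module S M] [AddCommGroup N] [Module S N] :
    Subsingleton (extGrp S 0 (ModuleCat.of S M) (ModuleCat.of S N)) ↔
      ∀ f : M →ₗ[S] N, f = 0 := by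
  let P : ProjectiveResolution (ModuleCat.of S M) := projectiveResolution _
  rw [extGrp_zero_iff_res _ _ P]
  constructor
  · intro h f
    have h2 := h (ModuleCat.ofHom (f.comp (augMap P))) (by
      ext x
      change f (augMap P ((P.complex.d 1 0).hom x)) = 0
      rw [(augMap_eq_zero_iff P _).2 ⟨x, rfl⟩, map_zero])
    ext m
    obtain ⟨x, rfl⟩ := augMap_surjective P m
    exact congrArg (fun g => g.hom x) h2
  · intro h f hf
    obtain ⟨g, hg⟩ := exists_factor_of_surjective (augMap P) f.hom (augMap_surjective P) (by
      intro x hx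
      obtain ⟨y, rfl⟩ := (augMap_eq_zero_iff P _).1 hx
      exact congrArg (fun g => g.hom y) hf)
    ext x
    have := hg x
    rw [h g] at this
    exact this.symm

/-- If `p' = p ∘ σ` are two surjections onto `M` and the pull-back along `σ` of `f : ker p → N`
extends to the source of `p'`, then `f` extends to the source of `p` (which is the sum of `ker p`
and the image of `σ`). -/
theorem exists_extension_of_pullback {M N B B' : Type} [AddCommGroup M] [Module S M]
    [AddCommGroup N] [Module S N] [AddCommGroup B] [Module S B] [AddCommGroup B'] [Module S B']
    (p : B →ₗ[S] M) (p' : B' →ₗ[S] M) (hp' : Function.Surjective p')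
    (σ : B' →ₗ[S] B) (hσ : ∀ x, p (σ x) = p' x) (f : LinearMap.ker p →ₗ[S] N)
    (g₀ : B' →ₗ[S] N) (hg₀ : ∀ x (hx : p (σ x) = 0), g₀ x = f ⟨σ x, hx⟩) :
    ∃ g : B →ₗ[S] N, ∀ x : LinearMap.ker p, g x = f x := by
  obtain ⟨g, hg⟩ := exists_factor_of_surjective
    ((LinearMap.ker p).subtype.coprod σ) (f.coprod g₀) (by
      intro b
      obtain ⟨x, hx⟩ := hp' (p b)
      refine ⟨(⟨b - σ x, by simp [hσ, hx]⟩, x), by simp⟩) (by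
      rintro ⟨a, x⟩ hax
      have h1 : (a : B) + σ x = 0 := by simpa using hax
      have h2 : σ x = -(a : B) := by rw [eq_neg_iff_add_eq_zero, add_comm, h1]
      have h3 : p (σ x) = 0 := by rw [h2, map_neg, a.2, neg_zero]
      have h4 : (⟨σ x, h3⟩ : LinearMap.ker p) = -a := Subtype.ext h2
      simp [hg₀ x h3, h4])
  exact ⟨g, fun x => by simpa using hg (x, 0)⟩

/-- If `Ext¹(M, N) = 0`, then for every surjection `p : B → M`, with `B` not necessarily projective,
every map `ker p → N` extends to `B`. -/
theorem exists_extension_of_extGrp_one {M N B : Type} [AddCommGroup M] [Module S M]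
    [AddCommGroup N] [Module S N] [AddCommGroup B] [Module S B]
    (h : Subsingleton (extGrp S 1 (ModuleCat.of S M) (ModuleCat.of S N)))
    (p : B →ₗ[S] M) (hp : Function.Surjective p) (f : LinearMap.ker p →ₗ[S] N) :
    ∃ g : B →ₗ[S] N, ∀ x : LinearMap.ker p, g x = f x := by
  let P : ProjectiveResolution (ModuleCat.of S M) := projectiveResolution _
  rw [extGrp_one_iff_res _ _ P] at h
  have : Module.Projective S (P.complex.X 0) :=
    (IsProjective.iff_projective (P.complex.X 0)).2 (P.projective 0)
  obtain ⟨σ, hσ⟩ := Module.projective_lifting_property p (augMap P) hp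
  have hσ' : ∀ x, p (σ x) = augMap P x := fun x => LinearMap.congr_fun hσ x
  have hd : ∀ y, p (σ ((P.complex.d 1 0).hom y)) = 0 := fun y => by
    rw [hσ', (augMap_eq_zero_iff P _).2 ⟨y, rfl⟩]
  let δ : P.complex.X 1 →ₗ[S] LinearMap.ker p :=
    (σ.comp (P.complex.d 1 0).hom).codRestrict _ hd
  obtain ⟨g₀, hg₀⟩ := h (ModuleCat.ofHom (f.comp δ)) (by
    ext y
    have h0 : δ ((P.complex.d 2 1).hom y) = 0 := by
      ext
      change σ ((P.complex.d 1 0).hom ((P.complex.d 2 1).hom y)) = 0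
      have := congrArg (fun g => g.hom y) (P.complex.d_comp_d 2 1 0)
      change (P.complex.d 1 0).hom ((P.complex.d 2 1).hom y) = 0 at this
      rw [this, map_zero]
    change f (δ ((P.complex.d 2 1).hom y)) = 0
    rw [h0, map_zero])
  refine exists_extension_of_pullback p (augMap P) (augMap_surjective P) σ hσ' f g₀.hom ?_
  intro x hx
  obtain ⟨y, rfl⟩ := (augMap_eq_zero_iff P x).1 (by rw [← hσ', hx])
  exact congrArg (fun g => g.hom y) hg₀

/-- `Ext¹(M, N)` vanishes if the maps `ker p → N` extend for one surjection `p : B → M` with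
`B` projective. -/
theorem extGrp_one_of_extension {M N B : Type} [AddCommGroup M] [Module S M]
    [AddCommGroup N] [Module S N] [AddCommGroup B] [Module S B] [Module.Projective S B]
    (p : B →ₗ[S] M) (hp : Function.Surjective p)
    (h : ∀ f : LinearMap.ker p →ₗ[S] N, ∃ g : B →ₗ[S] N, ∀ x : LinearMap.ker p, g x = f x) :
    Subsingleton (extGrp S 1 (ModuleCat.of S M) (ModuleCat.of S N)) := by
  let P : ProjectiveResolution (ModuleCat.of S M) := projectiveResolution _
  rw [extGrp_one_iff_res _ _ P]
  intro u hu
  obtain ⟨τ, hτ⟩ := Module.projective_lifting_property (augMap P) p (augMap_surjective P)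
  have hτ' : ∀ x, augMap P (τ x) = p x := fun x => LinearMap.congr_fun hτ x
  let δ : P.complex.X 1 →ₗ[S] LinearMap.ker (augMap P) :=
    (P.complex.d 1 0).hom.codRestrict _ fun y => (augMap_eq_zero_iff P _).2 ⟨y, rfl⟩
  obtain ⟨f, hf⟩ := exists_factor_of_surjective δ u.hom (by
    rintro ⟨x, hx⟩
    obtain ⟨y, rfl⟩ := (augMap_eq_zero_iff P x).1 hx
    exact ⟨y, rfl⟩) (by
    intro y hy
    have h0 : (P.complex.d 1 0).hom y = 0 := congrArg Subtype.val hy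
    obtain ⟨z, rfl⟩ := (ShortComplex.moduleCat_exact_iff _).1 (P.exact_succ 0) y h0
    exact congrArg (fun g => g.hom z) hu)
  let τ' : LinearMap.ker p →ₗ[S] LinearMap.ker (augMap P) :=
    (τ.comp (LinearMap.ker p).subtype).codRestrict _ fun x => by
      change augMap P (τ x) = 0
      rw [hτ', x.2]
  obtain ⟨g₀, hg₀⟩ := h (f.comp τ')
  obtain ⟨g, hg⟩ := exists_extension_of_pullback (augMap P) p hp τ hτ' f g₀
    (fun x hx => hg₀ ⟨x, by rw [LinearMap.mem_ker, ← hτ', hx]⟩)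
  refine ⟨ModuleCat.ofHom g, ?_⟩
  ext y
  exact (hg (δ y)).trans (hf y)

end ExtBridge

/-! ### Resolutions by finitely generated free modules -/

section Resolution

variable {Λ : Type} [Ring Λ]

theorem exists_cover [IsNoetherianRing Λ] (n : ℕ) (K : Submodule Λ (Fin n → Λ)) :
    ∃ (m : ℕ) (f : (Fin m → Λ) →ₗ[Λ] (Fin n → Λ)), LinearMap.range f = K := by
  obtain ⟨m, g, hg⟩ := Module.Finite.exists_fin' Λ K
  exact ⟨m, K.subtype.comp g, by
    rw [LinearMap.range_comp, LinearMap.range_eq_top.2 hg, Submodule.map_top,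
      Submodule.range_subtype]⟩

/-- Successive syzygies, each recorded as a submodule of a free module of finite rank. -/
noncomputable def syzygy [IsNoetherianRing Λ] (n : ℕ) (K : Submodule Λ (Fin n → Λ)) :
    ℕ → Σ m : ℕ, Submodule Λ (Fin m → Λ)
  | 0 => ⟨n, K⟩
  | t + 1 =>
    ⟨(exists_cover _ (syzygy n K t).2).choose,
      LinearMap.ker (exists_cover _ (syzygy n K t).2).choose_spec.choose⟩

theorem exists_fgProjRes [IsNoetherianRing Λ] {M : Type} [AddCommGroup M] [Module Λ M] (n : ℕ)
    (π : (Fin n → Λ) →ₗ[Λ] M) (hπ : Function.Surjective π) :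
    ∃ (R : FGProjRes Λ M) (e : R.P 0 ≃ₗ[Λ] (Fin n → Λ)), ∀ x, R.π x = π (e x) := by
  let s := syzygy n (LinearMap.ker π)
  let R : FGProjRes Λ M :=
    { P := fun t => Fin (s t).1 → Λ
      d := fun t => (exists_cover _ (s t).2).choose_spec.choose
      π := π
      surj := hπ
      exact0 := (exists_cover _ (s 0).2).choose_spec.choose_spec
      exact := fun t => (exists_cover _ (s (t + 1)).2).choose_spec.choose_spec }
  exact ⟨R, LinearEquiv.refl Λ (Fin n → Λ), fun _ => rfl⟩

/-- A cyclic module `Λ ⧸ K` has a resolution by finitely generated projectives starting with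
`Λ`; equivalently its first differential is a cover `q` of the left ideal `K`. -/
theorem exists_fgProjRes_quotient [IsNoetherianRing Λ] (K : Submodule Λ Λ) :
    ∃ (R : FGProjRes Λ (Λ ⧸ K)) (e : R.P 0 ≃ₗ[Λ] Λ),
      ∀ x, x ∈ K ↔ ∃ v, e (R.d 0 v) = x := by
  let ε : (Fin 1 → Λ) ≃ₗ[Λ] Λ := LinearEquiv.funUnique (Fin 1) Λ Λ
  obtain ⟨R, e, he⟩ := exists_fgProjRes 1 (K.mkQ.comp ε.toLinearMap)
    (K.mkQ_surjective.comp ε.surjective)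
  refine ⟨R, e.trans ε, fun x => ?_⟩
  have h0 : ∀ z, z ∈ LinearMap.range (R.d 0) ↔ ε (e z) ∈ K := by
    intro z
    rw [R.exact0, LinearMap.mem_ker, he]
    simp
  constructor
  · intro hx
    obtain ⟨v, hv⟩ := (h0 ((e.trans ε).symm x)).2 (by
      rw [← LinearEquiv.trans_apply, LinearEquiv.apply_symm_apply]; exact hx)
    exact ⟨v, by rw [hv, LinearEquiv.apply_symm_apply]⟩
  · rintro ⟨v, rfl⟩
    exact (h0 _).1 ⟨v, rfl⟩

end Resolution

/-! ### Cyclic right modules of grade one and two -/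

section Grade

variable {Λ : Type} [Ring Λ] {E : Type} [AddCommGroup E] [Module Λᵐᵒᵖ E]

/-- The surjection `Λ → eΛ`, `a ↦ e a`, onto a cyclic right module. -/
def toCyclic (e : E) : Λ →ₗ[Λᵐᵒᵖ] Submodule.span Λᵐᵒᵖ {e} where
  toFun a := ⟨MulOpposite.op a • e, Submodule.smul_mem _ _ (Submodule.mem_span_singleton_self e)⟩
  map_add' a b := by ext; simp [add_smul]
  map_smul' s a := by ext; simp [mul_smul]

theorem toCyclic_surjective (e : E) : Function.Surjective (toCyclic (Λ := Λ) e) := by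
  rintro ⟨x, hx⟩
  obtain ⟨s, rfl⟩ := Submodule.mem_span_singleton.1 hx
  exact ⟨s.unop, rfl⟩

theorem toCyclic_eq_zero_iff (e : E) (a : Λ) :
    toCyclic e a = 0 ↔ MulOpposite.op a • e = 0 :=
  Subtype.ext_iff

/-- If `Hom(eΛ, Λ) = 0`, then `Λ = Hom(Λ, Λ) → Hom(A, Λ)` is injective, where `A` is the annihilator
of `e`. -/
theorem eq_zero_of_grade (e : E)
    (h : Subsingleton (extGrp Λᵐᵒᵖ 0 (ModuleCat.of Λᵐᵒᵖ (Submodule.span Λᵐᵒᵖ {e}))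
      (ModuleCat.of Λᵐᵒᵖ Λ)))
    (y : Λ) (hy : ∀ a : Λ, MulOpposite.op a • e = 0 → y * a = 0) : y = 0 := by
  rw [extGrp_zero_iff] at h
  obtain ⟨g, hg⟩ := exists_factor_of_surjective (toCyclic e)
    ({ toFun := fun a => y * a
       map_add' := mul_add y
       map_smul' := fun s a => by simp [mul_assoc] } : Λ →ₗ[Λᵐᵒᵖ] Λ)
    (toCyclic_surjective e) (fun a ha => hy a ((toCyclic_eq_zero_iff e a).1 ha))
  have := hg 1
  rw [h g] at this
  simpa using this.symm

/-- If `Ext¹(eΛ, Λ) = 0`, then every right linear map `A → Λ` on the annihilator `A` of `e` is a left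
multiplication. -/
theorem exists_mul_of_grade (e : E)
    (h : Subsingleton (extGrp Λᵐᵒᵖ 1 (ModuleCat.of Λᵐᵒᵖ (Submodule.span Λᵐᵒᵖ {e}))
      (ModuleCat.of Λᵐᵒᵖ Λ)))
    (A : Submodule Λᵐᵒᵖ Λ) (hA : ∀ a : Λ, a ∈ A ↔ MulOpposite.op a • e = 0)
    (f : A →ₗ[Λᵐᵒᵖ] Λ) : ∃ y : Λ, ∀ a : A, f a = y * a := by
  obtain rfl : A = LinearMap.ker (toCyclic e) := by
    ext a
    rw [hA, LinearMap.mem_ker, toCyclic_eq_zero_iff]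
  obtain ⟨g, hg⟩ := exists_extension_of_extGrp_one h (toCyclic e) (toCyclic_surjective e) f
  refine ⟨g 1, fun a => ?_⟩
  have := g.map_smul (MulOpposite.op (a : Λ)) 1
  rw [← hg a]
  simpa using this

variable {V : Type} [AddCommGroup V] [Module Λᵐᵒᵖ V]

theorem eq_zero_of_grade_quotient (Z : Submodule Λᵐᵒᵖ V) (B : Submodule Λᵐᵒᵖ Z)
    (h : ∀ X : Submodule Λᵐᵒᵖ (Z ⧸ B), Subsingleton
      (extGrp Λᵐᵒᵖ 0 (ModuleCat.of Λᵐᵒᵖ X) (ModuleCat.of Λᵐᵒᵖ Λ)))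
    (z : Z) (y : Λ) (hy : ∀ a : Λ, MulOpposite.op a • z ∈ B → y * a = 0) : y = 0 :=
  eq_zero_of_grade (B.mkQ z) (h _) y fun a ha =>
    hy a ((Submodule.Quotient.mk_eq_zero B).1 (by simpa using ha))

theorem exists_mul_of_grade_quotient (Z : Submodule Λᵐᵒᵖ V) (B : Submodule Λᵐᵒᵖ Z)
    (h : ∀ X : Submodule Λᵐᵒᵖ (Z ⧸ B), Subsingleton
      (extGrp Λᵐᵒᵖ 1 (ModuleCat.of Λᵐᵒᵖ X) (ModuleCat.of Λᵐᵒᵖ Λ)))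
    (z : Z) (A : Submodule Λᵐᵒᵖ Λ) (hA : ∀ a : Λ, a ∈ A ↔ MulOpposite.op a • z ∈ B)
    (f : A →ₗ[Λᵐᵒᵖ] Λ) : ∃ y : Λ, ∀ a : A, f a = y * a :=
  exists_mul_of_grade (B.mkQ z) (h _) A (fun a => by
    rw [hA, ← Submodule.Quotient.mk_eq_zero B]; rfl) f

end Grade

/-! ### Consequences of the Gorenstein condition for left ideals -/

section Gorenstein

variable {Λ : Type} [Ring Λ]

/-- The annihilator of the class in `Ext^{t+1}(M, Λ)` of a cocycle `u` consists of the `a` for which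
`u a` factors through the differential. -/
theorem smul_mem_extBdry_iff {M : Type} [AddCommGroup M] [Module Λ M] (R : FGProjRes Λ M)
    (t : ℕ) (u : R.extSub (t + 1)) (a : Λ) :
    MulOpposite.op a • u ∈ R.extBdry (t + 1) ↔
      ∃ ψ : R.P t →ₗ[Λ] Λ, ∀ v, ψ (R.d t v) = (u : R.P (t + 1) →ₗ[Λ] Λ) v * a := by
  constructor
  · rintro ⟨ψ, hψ⟩
    exact ⟨ψ, fun v => LinearMap.congr_fun hψ v⟩
  · rintro ⟨ψ, hψ⟩
    exact ⟨ψ, LinearMap.ext hψ⟩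

/-- The elements `a` such that `g a` is a right multiplication form the annihilator of the class
of `g ∈ K*` in `K* / Λ = Ext¹(Λ ⧸ K, Λ)`, a module all of whose submodules have grade at least
`1`; so no non-zero left multiplication kills this annihilator. -/
theorem eq_zero_of_mul_conductor [IsNoetherianRing Λ] (hG : IsGorensteinLE Λ 2)
    (K : Submodule Λ Λ) (g : K →ₗ[Λ] Λ) (y : Λ)
    (hy : ∀ a c : Λ, (∀ x : K, g x * a = x * c) → y * a = 0) : y = 0 := by
  obtain ⟨R, e, he⟩ := exists_fgProjRes_quotient K
  let q : R.P 1 →ₗ[Λ] K :=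
    (e.toLinearMap.comp (R.d 0)).codRestrict K fun v => (he _).2 ⟨v, rfl⟩
  let u : R.extSub 1 := ⟨g.comp q, by
    ext v
    have h0 : q (R.d 1 v) = 0 := by
      ext
      change e (R.d 0 (R.d 1 v)) = 0
      have : R.d 1 v ∈ LinearMap.ker (R.d 0) := by
        rw [← R.exact 0]; exact ⟨v, rfl⟩
      rw [LinearMap.mem_ker.1 this, map_zero]
    change g (q (R.d 1 v)) = 0
    rw [h0, map_zero]⟩
  refine eq_zero_of_grade_quotient (R.extSub 1) (R.extBdry 1)
    (fun X => hG _ R 1 le_rfl one_le_two X 0 one_pos) u y fun a ha => ?_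
  obtain ⟨ψ, hψ⟩ := (smul_mem_extBdry_iff R 0 u a).1 ha
  refine hy a (ψ (e.symm 1)) fun x => ?_
  obtain ⟨v, hv⟩ := (he x).1 x.2
  have hx : q v = x := Subtype.ext hv
  have h1 : R.d 0 v = (x : Λ) • e.symm 1 := by
    rw [← map_smul, LinearEquiv.eq_symm_apply, hv, smul_eq_mul, mul_one]
  have h2 := hψ v
  rw [h1, map_smul, smul_eq_mul] at h2
  rw [h2, ← hx]
  rfl

/-- There is a surjection `q : F → K` with `F` projective such that, for `θ ∈ (ker q)*`, the set `A`
of those `a` for which `θ a` extends to `F` is the annihilator of an element of `Ext²(Λ ⧸ K, Λ)`,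
namely the class of `θ`. All submodules of the latter have grade at least `2`, whence
`Λ = Hom(Λ, Λ) → Hom(A, Λ)` is bijective. -/
theorem exists_cover_grade_two [IsNoetherianRing Λ] (hG : IsGorensteinLE Λ 2)
    (K : Submodule Λ Λ) :
    ∃ (F : Type) (_ : AddCommGroup F) (_ : Module Λ F) (_ : Module.Projective Λ F)
      (q : F →ₗ[Λ] K), Function.Surjective q ∧
      ∀ (θ : LinearMap.ker q →ₗ[Λ] Λ) (A : Submodule Λᵐᵒᵖ Λ),
        (∀ a, a ∈ A ↔ ∃ ψ : F →ₗ[Λ] Λ, ∀ v : LinearMap.ker q, ψ v = θ v * a) →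
        (∀ y : Λ, (∀ a ∈ A, y * a = 0) → y = 0) ∧
        (∀ f : A →ₗ[Λᵐᵒᵖ] Λ, ∃ y : Λ, ∀ a : A, f a = y * a) := by
  obtain ⟨R, e, he⟩ := exists_fgProjRes_quotient K
  let q : R.P 1 →ₗ[Λ] K :=
    (e.toLinearMap.comp (R.d 0)).codRestrict K fun v => (he _).2 ⟨v, rfl⟩
  have hq : ∀ v, v ∈ LinearMap.ker q ↔ ∃ w, R.d 1 w = v := by
    intro v
    change _ ↔ v ∈ LinearMap.range (R.d 1)
    rw [R.exact 0, LinearMap.mem_ker, LinearMap.mem_ker, ← e.map_eq_zero_iff (x := R.d 0 v)]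
    exact Subtype.ext_iff
  refine ⟨R.P 1, inferInstance, inferInstance, inferInstance, q, ?_, fun θ A hA => ?_⟩
  · intro x
    obtain ⟨v, hv⟩ := (he x).1 x.2
    exact ⟨v, Subtype.ext hv⟩
  let δ : R.P 2 →ₗ[Λ] LinearMap.ker q := (R.d 1).codRestrict _ fun w => (hq _).2 ⟨w, rfl⟩
  let u : R.extSub 2 := ⟨θ.comp δ, by
    ext w
    have h0 : δ (R.d 2 w) = 0 := by
      ext
      change R.d 1 (R.d 2 w) = 0
      have : R.d 2 w ∈ LinearMap.ker (R.d 1) := by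
        rw [← R.exact 1]; exact ⟨w, rfl⟩
      exact this
    change θ (δ (R.d 2 w)) = 0
    rw [h0, map_zero]⟩
  have hA' : ∀ a, a ∈ A ↔ MulOpposite.op a • u ∈ R.extBdry 2 := by
    intro a
    rw [hA, smul_mem_extBdry_iff]
    refine exists_congr fun ψ => ⟨fun h w => h (δ w), ?_⟩
    rintro h ⟨v, hv⟩
    obtain ⟨w, rfl⟩ := (hq v).1 hv
    exact h w
  exact ⟨fun y hy => eq_zero_of_grade_quotient (R.extSub 2) (R.extBdry 2)
      (fun X => hG _ R 2 one_le_two le_rfl X 0 two_pos) u y fun a ha => hy a ((hA' a).2 ha),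
    fun f => exists_mul_of_grade_quotient (R.extSub 2) (R.extBdry 2)
      (fun X => hG _ R 2 one_le_two le_rfl X 1 one_lt_two) u A hA' f⟩

end Gorenstein

/-! ### The bidual of a left ideal -/

section Bidual

variable {Λ : Type} [Ring Λ]

/-- Right multiplication by `c`, as a functional on the left ideal `K`. -/
def rmul (K : Submodule Λ Λ) (c : Λ) : K →ₗ[Λ] Λ where
  toFun x := x * c
  map_add' x y := add_mul (x : Λ) y c
  map_smul' l x := mul_assoc l (x : Λ) c

theorem op_smul_rmul (K : Submodule Λ Λ) (a c : Λ) :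
    MulOpposite.op a • rmul K c = rmul K (c * a) :=
  LinearMap.ext fun x => mul_assoc (x : Λ) c a

/-- The map `I** → Λ** = Λ` dual to `Λ = Λ* → I*`. -/
def bidualToRing (I : Submodule Λ Λ) : ((I →ₗ[Λ] Λ) →ₗ[Λᵐᵒᵖ] Λ) →ₗ[Λ] Λ where
  toFun η := η (rmul I 1)
  map_add' _ _ := rfl
  map_smul' _ _ := rfl

theorem bidual_rmul (I : Submodule Λ Λ) (η : (I →ₗ[Λ] Λ) →ₗ[Λᵐᵒᵖ] Λ) (c : Λ) :
    η (rmul I c) = bidualToRing I η * c := by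
  have h := op_smul_rmul I c 1
  rw [one_mul] at h
  rw [← h, map_smul]
  rfl

theorem bidualToRing_evalL (I : Submodule Λ Λ) (x : I) :
    bidualToRing I (evalL Λ I x) = x :=
  mul_one (x : Λ)

/-- The map `I** → Λ** = Λ` is injective because its kernel is the dual of
`Ext¹(Λ ⧸ I, Λ)`, the cokernel of `Λ* → I*`. -/
theorem bidualToRing_injective [IsNoetherianRing Λ] (hG : IsGorensteinLE Λ 2)
    (I : Submodule Λ Λ) : Function.Injective (bidualToRing I) := by
  rw [injective_iff_map_eq_zero]
  intro η hη
  ext f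
  refine eq_zero_of_mul_conductor hG I f (η f) fun a c h => ?_
  have h1 : MulOpposite.op a • f = rmul I c := LinearMap.ext h
  have h2 : η (MulOpposite.op a • f) = η f * a := η.map_smul _ f
  rw [← h2, h1, bidual_rmul, hη, zero_mul]

theorem le_range_bidualToRing (I : Submodule Λ Λ) : I ≤ LinearMap.range (bidualToRing I) :=
  fun x hx => ⟨evalL Λ I ⟨x, hx⟩, bidualToRing_evalL I ⟨x, hx⟩⟩

/-- Every `f ∈ I*` extends to `I**`, viewed inside `Λ`: send `η` to `η f`. -/
theorem exists_extension_bidual [IsNoetherianRing Λ] (hG : IsGorensteinLE Λ 2)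
    (I : Submodule Λ Λ) (f : I →ₗ[Λ] Λ) :
    ∃ F : LinearMap.range (bidualToRing I) →ₗ[Λ] Λ,
      ∀ x (hx : x ∈ I), F ⟨x, le_range_bidualToRing I hx⟩ = f ⟨x, hx⟩ := by
  let e := LinearEquiv.ofInjective (bidualToRing I) (bidualToRing_injective hG I)
  refine ⟨(evalR Λ (I →ₗ[Λ] Λ) f).comp e.symm.toLinearMap, fun x hx => ?_⟩
  have h : e.symm ⟨x, le_range_bidualToRing I hx⟩ = evalL Λ I ⟨x, hx⟩ := by
    rw [LinearEquiv.symm_apply_eq]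
    exact Subtype.ext (bidualToRing_evalL I ⟨x, hx⟩).symm
  change e.symm ⟨x, le_range_bidualToRing I hx⟩ f = _
  rw [h]
  rfl

/-- For `I ≤ K ≤ I**`, restriction `K* → I*` is injective: if `f` vanishes on `I` and `f a` is right
multiplication by `c`, then `c` kills `I`, hence also `I** ⊇ K`, so `f a = 0`. -/
theorem eq_zero_of_vanish_on [IsNoetherianRing Λ] (hG : IsGorensteinLE Λ 2)
    (I K : Submodule Λ Λ) (hIK : I ≤ K) (hK : K ≤ LinearMap.range (bidualToRing I))
    (f : K →ₗ[Λ] Λ) (hf : ∀ x (hx : x ∈ I), f ⟨x, hIK hx⟩ = 0) : f = 0 := by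
  ext x
  obtain ⟨η, hη⟩ := hK x.2
  refine eq_zero_of_mul_conductor hG K f (f x) fun a c h => ?_
  have h0 : rmul I c = 0 := by
    ext i
    have := h ⟨i, hIK i.2⟩
    rw [hf _ i.2, zero_mul] at this
    exact this.symm
  rw [h x, ← hη, ← bidual_rmul, h0, map_zero]

/-- A subquotient `K ⧸ I` of `I** ⧸ I`, given as `ρ : K → Y`, has no non-zero functional. -/
theorem extGrp_zero_subquotient [IsNoetherianRing Λ] (hG : IsGorensteinLE Λ 2)
    (I K : Submodule Λ Λ) (hIK : I ≤ K) (hK : K ≤ LinearMap.range (bidualToRing I))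
    {Y : Type} [AddCommGroup Y] [Module Λ Y] (ρ : K →ₗ[Λ] Y) (hρ : Function.Surjective ρ)
    (hker : ∀ x : K, ρ x = 0 ↔ (x : Λ) ∈ I) (f : Y →ₗ[Λ] Λ) : f = 0 := by
  have h := eq_zero_of_vanish_on hG I K hIK hK (f.comp ρ) fun x hx => by
    rw [LinearMap.comp_apply, (hker ⟨x, hIK hx⟩).2 hx, map_zero]
  ext y
  obtain ⟨x, rfl⟩ := hρ y
  exact LinearMap.congr_fun h x

/-- Let `φ` represent a class `ξ` in `Ext¹(Y, Λ)`, where `Y = K ⧸ I` lies in `I** ⧸ I`, and let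
`A` be the annihilator of the image of `ξ` in `Ext¹(K, Λ) = Ext²(Λ ⧸ K, Λ)`. Since functionals on
`I` extend to `I**`, the multiples `φ a`, `a ∈ A`, extend to the projective module `F` over `Y`, and
uniquely so because `Y* = 0`. As `Λ = Hom(Λ, Λ) → Hom(A, Λ)` is bijective, these extensions come
from a single extension of `φ` itself. -/
theorem extGrp_one_subquotient [IsNoetherianRing Λ] (hG : IsGorensteinLE Λ 2)
    (I K : Submodule Λ Λ) (hIK : I ≤ K) (hK : K ≤ LinearMap.range (bidualToRing I))
    {Y : Type} [AddCommGroup Y] [Module Λ Y] (ρ : K →ₗ[Λ] Y) (hρ : Function.Surjective ρ)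
    (hker : ∀ x : K, ρ x = 0 ↔ (x : Λ) ∈ I) :
    Subsingleton (extGrp Λ 1 (ModuleCat.of Λ Y) (ModuleCat.of Λ Λ)) := by
  obtain ⟨F, _, _, _, q, hq, hF⟩ := exists_cover_grade_two hG K
  let p : F →ₗ[Λ] Y := ρ.comp q
  have hp : Function.Surjective p := hρ.comp hq
  have hqp : LinearMap.ker q ≤ LinearMap.ker p := fun v hv => by
    change ρ (q v) = 0
    rw [LinearMap.mem_ker.1 hv, map_zero]
  refine extGrp_one_of_extension p hp fun φ => ?_
  -- `θ` represents the image of `ξ` in `Ext¹(K, Λ)`.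
  let θ : LinearMap.ker q →ₗ[Λ] Λ := φ.comp (Submodule.inclusion hqp)
  let A : Submodule Λᵐᵒᵖ Λ :=
    { carrier := {a | ∃ ψ : F →ₗ[Λ] Λ, ∀ v : LinearMap.ker q, ψ v = θ v * a}
      add_mem' := by
        rintro a b ⟨ψ, hψ⟩ ⟨ψ', hψ'⟩
        exact ⟨ψ + ψ', fun v => by rw [LinearMap.add_apply, hψ, hψ', mul_add]⟩
      zero_mem' := ⟨0, fun v => by simp⟩
      smul_mem' := by
        rintro s a ⟨ψ, hψ⟩
        refine ⟨s • ψ, fun v => ?_⟩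
        rw [LinearMap.smul_apply, hψ]
        exact mul_assoc _ _ _ }
  obtain ⟨hA0, hA1⟩ := hF θ A fun a => Iff.rfl
  -- The difference of `φ a` and an extension of `θ a` descends to `I`, hence extends to `I**`.
  have hex : ∀ a : A, ∃ Φ : F →ₗ[Λ] Λ, ∀ v : LinearMap.ker p, Φ v = φ v * a := by
    rintro ⟨a, ψ, hψ⟩
    let r : LinearMap.ker p →ₗ[Λ] I :=
      ((K.subtype.comp q).comp (LinearMap.ker p).subtype).codRestrict I
        fun v => (hker _).1 v.2
    obtain ⟨f, hf⟩ := exists_factor_of_surjective r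
      (MulOpposite.op a • φ - ψ.comp (LinearMap.ker p).subtype) (by
        rintro ⟨x, hx⟩
        obtain ⟨v, hv⟩ := hq ⟨x, hIK hx⟩
        refine ⟨⟨v, ?_⟩, ?_⟩
        · change ρ (q v) = 0
          rw [hv, hker]
          exact hx
        · ext
          change ((q v : K) : Λ) = x
          rw [hv]) (by
        rintro ⟨v, hv⟩ hrv
        have hrv' : ((r ⟨v, hv⟩ : I) : Λ) = 0 := by rw [hrv]; rfl
        have hqv : q v = 0 := Subtype.ext hrv'
        have := hψ ⟨v, hqv⟩
        change φ ⟨v, hv⟩ * a - ψ v = 0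
        rw [sub_eq_zero]
        exact this.symm)
    obtain ⟨g, hg⟩ := exists_extension_bidual hG I f
    refine ⟨ψ + g.comp ((Submodule.inclusion hK).comp q), fun v => ?_⟩
    have h1 : g (Submodule.inclusion hK (q v)) = f (r v) := hg _ (r v).2
    have h2 : f (r v) = φ v * a - ψ v := hf v
    change ψ v + g (Submodule.inclusion hK (q v)) = φ v * a
    rw [h1, h2, add_sub_cancel]
  have huniq : ∀ Φ Φ' : F →ₗ[Λ] Λ, (∀ v : LinearMap.ker p, Φ v = Φ' v) → Φ = Φ' := by
    intro Φ Φ' h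
    obtain ⟨f, hf⟩ := exists_factor_of_surjective p (Φ - Φ') hp fun v hv => by
      rw [LinearMap.sub_apply, sub_eq_zero]
      exact h ⟨v, hv⟩
    ext v
    have := hf v
    rw [extGrp_zero_subquotient hG I K hIK hK ρ hρ hker f] at this
    exact (sub_eq_zero.1 this.symm)
  choose Φ hΦ using hex
  let Φl : A →ₗ[Λᵐᵒᵖ] (F →ₗ[Λ] Λ) :=
    { toFun := Φ
      map_add' := fun a b => huniq _ _ fun v => by
        rw [LinearMap.add_apply, hΦ, hΦ, hΦ, Submodule.coe_add, mul_add]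
      map_smul' := fun s a => huniq _ _ fun v => by
        rw [RingHom.id_apply, LinearMap.smul_apply, hΦ, hΦ]
        exact (mul_assoc _ _ _).symm }
  -- For fixed `v`, the right linear map `a ↦ Φ a v` on `A` is left multiplication by some `y v`.
  have hy : ∀ v : F, ∃ y : Λ, ∀ a : A, Φ a v = y * a := fun v =>
    hA1 ((⟨⟨fun f => f v, fun _ _ => rfl⟩, fun _ _ => rfl⟩ :
      (F →ₗ[Λ] Λ) →ₗ[Λᵐᵒᵖ] Λ).comp Φl)
  choose y hy using hy
  have heq : ∀ x z : Λ, (∀ a : A, x * a = z * a) → x = z := fun x z h =>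
    sub_eq_zero.1 (hA0 _ fun a ha => by rw [sub_mul, h ⟨a, ha⟩, sub_self])
  refine ⟨{ toFun := y, map_add' := fun v w => heq _ _ fun a => ?_,
            map_smul' := fun l v => heq _ _ fun a => ?_ }, fun v => heq _ _ fun a => ?_⟩
  · rw [add_mul, ← hy, ← hy, ← hy, map_add]
  · rw [RingHom.id_apply, smul_eq_mul, mul_assoc, ← hy, ← hy, map_smul, smul_eq_mul]
  · change y v * a = _
    rw [← hy, hΦ]

/-- The quotient `I** ⧸ I`, realised as a submodule of `Λ ⧸ I`, is pseudo-null. -/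
theorem isPseudoNull_bidual_quotient [IsNoetherianRing Λ] (hG : IsGorensteinLE Λ 2)
    (I : Submodule Λ Λ) :
    IsPseudoNull Λ ((LinearMap.range (bidualToRing I)).map I.mkQ) := by
  intro Y j hj
  let K : Submodule Λ Λ := (Y.map (Submodule.subtype _)).comap I.mkQ
  have hIK : I ≤ K := fun x hx => by
    change I.mkQ x ∈ Y.map (Submodule.subtype _)
    rw [Submodule.mkQ_apply, (Submodule.Quotient.mk_eq_zero I).2 hx]
    exact zero_mem _
  have hK : K ≤ LinearMap.range (bidualToRing I) := by
    rintro x ⟨z, -, hz⟩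
    obtain ⟨w, hw, hwz⟩ := z.2
    have h1 : x - w ∈ I := by
      rw [← Submodule.Quotient.mk_eq_zero I, Submodule.Quotient.mk_sub, sub_eq_zero]
      exact hz.symm.trans hwz.symm
    have := add_mem (le_range_bidualToRing I h1) hw
    rwa [sub_add_cancel] at this
  let κ : Y →ₗ[Λ] (Λ ⧸ I) := (Submodule.subtype _).comp Y.subtype
  have hκ : Function.Injective κ := Subtype.val_injective.comp Subtype.val_injective
  let e := LinearEquiv.ofInjective κ hκ
  have hmem : ∀ x : K, I.mkQ x ∈ LinearMap.range κ := by
    rintro ⟨x, z, hz, hzx⟩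
    exact ⟨⟨z, hz⟩, hzx⟩
  let ρ : K →ₗ[Λ] Y := e.symm.toLinearMap.comp
    ((I.mkQ.comp K.subtype).codRestrict (LinearMap.range κ) hmem)
  have hρκ : ∀ x : K, κ (ρ x) = I.mkQ x := fun x =>
    congrArg Subtype.val (e.apply_symm_apply ⟨I.mkQ x, hmem x⟩)
  have hρ : Function.Surjective ρ := by
    intro z
    obtain ⟨x, hx⟩ := I.mkQ_surjective (κ z)
    refine ⟨⟨x, z, z.2, hx.symm⟩, hκ ?_⟩
    rw [hρκ]
    exact hx
  have hker : ∀ x : K, ρ x = 0 ↔ (x : Λ) ∈ I := fun x => by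
    rw [← Submodule.Quotient.mk_eq_zero I, ← Submodule.mkQ_apply, ← hρκ, map_eq_zero_iff κ hκ]
  interval_cases j
  · exact (extGrp_zero_iff _ _).2 (extGrp_zero_subquotient (Y := Y) hG I K hIK hK ρ hρ hker)
  · exact extGrp_one_subquotient (Y := Y) hG I K hIK hK ρ hρ hker

/-! ### Pseudo-null submodules of `Λ ⧸ I` for reflexive `I` -/

/-- A pseudo-null `K ⧸ I` makes the restriction `K* → I*` bijective, so each `x ∈ K` gives an
element of `I**`. -/
theorem eq_bot_of_isPseudoNull (I : Submodule Λ Λ) (hI : Function.Surjective (evalL Λ I))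
    (X : Submodule Λ (Λ ⧸ I)) (hX : IsPseudoNull Λ X) : X = ⊥ := by
  let K : Submodule Λ Λ := X.comap I.mkQ
  let ρ : K →ₗ[Λ] (⊤ : Submodule Λ X) :=
    ((I.mkQ.comp K.subtype).codRestrict X fun x => x.2).codRestrict ⊤ fun _ => trivial
  have hρ : Function.Surjective ρ := by
    rintro ⟨⟨z, hz⟩, -⟩
    obtain ⟨x, rfl⟩ := I.mkQ_surjective z
    exact ⟨⟨x, hz⟩, rfl⟩
  have hker : ∀ x : K, ρ x = 0 ↔ (x : Λ) ∈ I := fun x => by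
    rw [← Submodule.Quotient.mk_eq_zero I, Subtype.ext_iff, Subtype.ext_iff]
    rfl
  have hIK : I ≤ K := fun x hx => by
    change I.mkQ x ∈ X
    rw [Submodule.mkQ_apply, (Submodule.Quotient.mk_eq_zero I).2 hx]
    exact zero_mem _
  have hex : ∀ f : I →ₗ[Λ] Λ, ∃ g : K →ₗ[Λ] Λ, ∀ x (hx : x ∈ I),
      g ⟨x, hIK hx⟩ = f ⟨x, hx⟩ := by
    intro f
    let r : LinearMap.ker ρ →ₗ[Λ] I :=
      (K.subtype.comp (LinearMap.ker ρ).subtype).codRestrict I fun x => (hker _).1 x.2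
    obtain ⟨g, hg⟩ := exists_extension_of_extGrp_one (hX ⊤ 1 one_lt_two) ρ hρ (f.comp r)
    exact ⟨g, fun x hx => hg ⟨⟨x, hIK hx⟩, (hker _).2 hx⟩⟩
  have huniq : ∀ g g' : K →ₗ[Λ] Λ, (∀ x (hx : x ∈ I), g ⟨x, hIK hx⟩ = g' ⟨x, hIK hx⟩) →
      g = g' := by
    intro g g' h
    obtain ⟨f, hf⟩ := exists_factor_of_surjective (X := K) (B := (⊤ : Submodule Λ X)) ρ
      (g - g') hρ fun x hx => by
      rw [LinearMap.sub_apply, sub_eq_zero]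
      exact h x ((hker x).1 hx)
    ext x
    have := hf x
    rw [(extGrp_zero_iff _ _).1 (hX ⊤ 0 two_pos) f] at this
    exact sub_eq_zero.1 this.symm
  choose E hE using hex
  rw [eq_bot_iff]
  intro z hz
  obtain ⟨x, rfl⟩ := I.mkQ_surjective z
  let η : (I →ₗ[Λ] Λ) →ₗ[Λᵐᵒᵖ] Λ :=
    { toFun := fun f => E f ⟨x, hz⟩
      map_add' := fun f g => by
        rw [huniq (E (f + g)) (E f + E g) fun x hx => by
          rw [LinearMap.add_apply, hE _ x hx, hE _ x hx, hE _ x hx, LinearMap.add_apply]]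
        rfl
      map_smul' := fun s f => by
        rw [huniq (E (s • f)) (s • E f) fun x hx => by
          rw [LinearMap.smul_apply, hE _ x hx, hE _ x hx, LinearMap.smul_apply]]
        rfl }
  -- By reflexivity `η` is evaluation at some `i ∈ I`; the inclusion `I → Λ` shows that `x = i`.
  obtain ⟨i, hi⟩ := hI η
  have h1 : η (rmul I 1) = i := by
    rw [← hi]
    exact bidualToRing_evalL I i
  have h2 : η (rmul I 1) = x := by
    change E (rmul I 1) ⟨x, hz⟩ = x
    rw [huniq (E (rmul I 1)) (rmul K 1) fun x hx => hE _ x hx]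
    exact mul_one x
  rw [Submodule.mem_bot, Submodule.mkQ_apply, Submodule.Quotient.mk_eq_zero, ← h2, h1]
  exact i.2

end Bidual

/-! ### The characterization of reflexive left ideals -/

/-- For a `2`-Gorenstein ring, a non-zero proper left ideal `I` is reflexive iff
`Λ/I` has no non-zero pseudo-null submodule. -/
theorem stmt_17 (Λ : Type) [Ring Λ] [IsNoetherianRing Λ] [IsNoetherianRing Λᵐᵒᵖ]
    (hG : IsGorensteinLE Λ 2)
    (I : Submodule Λ Λ) (hI0 : I ≠ ⊥) (hItop : I ≠ ⊤) :
    Function.Bijective (evalL Λ I) ↔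
      ∀ X : Submodule Λ (Λ ⧸ I), IsPseudoNull Λ X → X = ⊥ := by
  constructor
  · exact fun hI X hX => eq_bot_of_isPseudoNull I hI.2 X hX
  · intro h
    have hJ := h _ (isPseudoNull_bidual_quotient hG I)
    refine ⟨fun x x' hxx => ?_, fun η => ?_⟩
    · have := congrArg (bidualToRing I) hxx
      rw [bidualToRing_evalL, bidualToRing_evalL] at this
      exact Subtype.ext this
    · have hη : I.mkQ (bidualToRing I η) ∈ (LinearMap.range (bidualToRing I)).map I.mkQ :=
        ⟨_, ⟨η, rfl⟩, rfl⟩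
      rw [hJ, Submodule.mem_bot, Submodule.mkQ_apply, Submodule.Quotient.mk_eq_zero] at hη
      exact ⟨⟨_, hη⟩, bidualToRing_injective hG I (bidualToRing_evalL I ⟨_, hη⟩)⟩
end

section
/- Let Λ be a left and right Noetherian ring and k a positive integer. Every k-torsionfree finitely generated left Λ-module is projective if and only if every finitely generated right Λ-module N with Ext^j_{Λ^op}(N, Λ) = 0 for all 1 ≤ j ≤ k is projective. -/
/-!
For a map `g : P₁ → P₀` of modules with `P₀` projective, `Coker g` is projective if and only if
`g` is von Neumann regular, i.e. `g h g = g` for some `h : P₀ → P₁`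
(`exists_regular_of_projective`, `projective_of_regular`). Duality `(-)* = Hom(-, Λ)` preserves
this property, and between finite free modules it is full and faithful (`exists_eq_dualMap`,
`dualMap_injective`), so it also reflects it. Hence, for a presentation of `M` by finite free
modules, `M` is projective if and only if `Tr M` is.

If the right modules with vanishing `Ext` are projective, the theorem follows for a
`k`-torsionfree `M` by applying this to a finite free presentation of `M`.

Conversely, by fullness every finitely generated right module `N` is `Tr M` for a finite free
presentation of some `M` (`exists_presentation_Tr`). That `M` is `k`-torsionfree as soon as
`Ext^j(N, Λ) = 0` for `1 ≤ j ≤ k`, because the vanishing of `Ext^j(Tr M, Λ)` for `j ≥ 1` does not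
depend on the presentation (`ext_Tr_of_presentation`): comparing two presentations expresses the
identity of one transpose as a map through the other one minus a map through a projective module,
and `Ext^j(-, Λ)` is additive and vanishes on projectives.
-/


open CategoryTheory

namespace AuslanderTranspose

/-! ### Vanishing of Ext -/

section ExtVanishing

instance leftDerived_additive {C D : Type*} [Category* C] [Abelian C] [HasProjectiveResolutions C]
    [Category* D] [Abelian D] (F : C ⥤ D) [F.Additive] (n : ℕ) : (F.leftDerived n).Additive where
  map_add {X Y f g} := by
    -- a sum of lifts to projective resolutions is a lift of the sum
    let P := projectiveResolution X
    let Q := projectiveResolution Y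
    have w : (ProjectiveResolution.lift f P Q + ProjectiveResolution.lift g P Q) ≫ Q.π =
        P.π ≫ (ChainComplex.single₀ C).map (f + g) := by
      rw [Preadditive.add_comp, ProjectiveResolution.lift_commutes,
        ProjectiveResolution.lift_commutes, ← Preadditive.comp_add, ← Functor.map_add]
    rw [F.leftDerived_map_eq n _ _ w,
      F.leftDerived_map_eq n f _ (ProjectiveResolution.lift_commutes f P Q),
      F.leftDerived_map_eq n g _ (ProjectiveResolution.lift_commutes g P Q),
      Functor.map_add, Preadditive.add_comp, Preadditive.comp_add]

variable {R : Type} [Ring R]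

lemma ext_map_add (n : ℕ) {X Y : ModuleCat R} (Z : ModuleCat R) (f g : X ⟶ Y) :
    ((_root_.Ext ℤ (ModuleCat R) n).map (f + g).op).app Z =
      ((_root_.Ext ℤ (ModuleCat R) n).map f.op).app Z +
        ((_root_.Ext ℤ (ModuleCat R) n).map g.op).app Z := by
  change (((((linearYoneda ℤ (ModuleCat R)).obj Z).rightOp).leftDerived n).map (f + g)).unop = _
  rw [Functor.map_add]
  rfl

lemma subsingleton_ext_of_projective (n : ℕ) (hn : 1 ≤ n) (X Z : ModuleCat R)
    [Module.Projective R X] : Subsingleton (extGrp R n X Z) := by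
  obtain ⟨m, rfl⟩ : ∃ m, n = m + 1 := ⟨n - 1, by omega⟩
  have : Projective X := (IsProjective.iff_projective (R := R) X).1 inferInstance
  exact ModuleCat.subsingleton_of_isZero (isZero_Ext_succ_of_projective X Z m)

/-- If the identity of `X` is the sum of an endomorphism factoring through `Y` and one factoring
through a projective `P`, then vanishing of positive `Ext` passes from `Y` to `X`. -/
lemma subsingleton_ext_of_factor (n : ℕ) (hn : 1 ≤ n) {X Y P Z : Type}
    [AddCommGroup X] [AddCommGroup Y] [AddCommGroup P] [AddCommGroup Z]
    [Module R X] [Module R Y] [Module R P] [Module R Z] [Module.Projective R P]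
    (a : X →ₗ[R] Y) (b : Y →ₗ[R] X) (c : X →ₗ[R] P) (d : P →ₗ[R] X)
    (h : ∀ x, b (a x) + d (c x) = x)
    (hY : Subsingleton (extGrp R n (ModuleCat.of R Y) (ModuleCat.of R Z))) :
    Subsingleton (extGrp R n (ModuleCat.of R X) (ModuleCat.of R Z)) := by
  have hP := subsingleton_ext_of_projective n hn (ModuleCat.of R P) (ModuleCat.of R Z)
  have hid : 𝟙 (ModuleCat.of R X) =
      ModuleCat.ofHom a ≫ ModuleCat.ofHom b + ModuleCat.ofHom c ≫ ModuleCat.ofHom d := by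
    ext x
    exact (h x).symm
  have key := ext_map_add n (ModuleCat.of R Z)
    (ModuleCat.ofHom a ≫ ModuleCat.ofHom b) (ModuleCat.ofHom c ≫ ModuleCat.ofHom d)
  rw [← hid, CategoryTheory.op_id, CategoryTheory.Functor.map_id, CategoryTheory.op_comp,
    CategoryTheory.op_comp, Functor.map_comp, Functor.map_comp,
    NatTrans.id_app, NatTrans.comp_app, NatTrans.comp_app] at key
  have zY : Limits.IsZero (((_root_.Ext ℤ (ModuleCat R) n).obj (Opposite.op (ModuleCat.of R Y))).obj
      (ModuleCat.of R Z)) :=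
    @ModuleCat.isZero_of_subsingleton _ _ _ hY
  have zP : Limits.IsZero (((_root_.Ext ℤ (ModuleCat R) n).obj (Opposite.op (ModuleCat.of R P))).obj
      (ModuleCat.of R Z)) :=
    @ModuleCat.isZero_of_subsingleton _ _ _ hP
  refine ModuleCat.subsingleton_of_isZero ((Limits.IsZero.iff_id_eq_zero _).2 (key.trans ?_))
  rw [zY.eq_of_tgt (((_root_.Ext ℤ (ModuleCat R) n).map (ModuleCat.ofHom b).op).app _) 0,
    zP.eq_of_tgt (((_root_.Ext ℤ (ModuleCat R) n).map (ModuleCat.ofHom d).op).app _) 0,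
    Limits.zero_comp, Limits.zero_comp, add_zero]
  rfl

end ExtVanishing

/-! ### Regular maps and projective cokernels -/

section Regular

variable {R : Type} [Ring R] {P₁ P₀ M : Type} [AddCommGroup P₁] [AddCommGroup P₀]
  [AddCommGroup M] [Module R P₁] [Module R P₀] [Module R M]

lemma exists_regular_of_projective [Module.Projective R P₀] [Module.Projective R M]
    (g : P₁ →ₗ[R] P₀) (π : P₀ →ₗ[R] M) (hπ : Function.Surjective π)
    (hg : LinearMap.range g = LinearMap.ker π) :
    ∃ h : P₀ →ₗ[R] P₁, ∀ x, g (h (g x)) = g x := by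
  obtain ⟨s, hs⟩ := Module.projective_lifting_property π LinearMap.id hπ
  have hs' : ∀ m, π (s m) = m := fun m => LinearMap.congr_fun hs m
  -- the projection of `P₀` onto `Im g = Ker π` along the splitting `s`
  let e : P₀ →ₗ[R] LinearMap.range g :=
    (LinearMap.id - s ∘ₗ π).codRestrict (LinearMap.range g) (fun x => by
      rw [hg]; simp [hs'])
  obtain ⟨h, hh⟩ := Module.projective_lifting_property g.rangeRestrict e
    g.surjective_rangeRestrict
  refine ⟨h, fun x => ?_⟩
  have h1 : g (h (g x)) = g x - s (π (g x)) :=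
    congrArg Subtype.val (LinearMap.congr_fun hh (g x))
  have h2 : π (g x) = 0 := by
    rw [← LinearMap.mem_ker, ← hg]; exact ⟨x, rfl⟩
  rw [h1, h2, map_zero, sub_zero]

lemma projective_of_regular [Module.Projective R P₀]
    (g : P₁ →ₗ[R] P₀) (π : P₀ →ₗ[R] M) (hπ : Function.Surjective π)
    (hg : LinearMap.range g = LinearMap.ker π)
    (h : P₀ →ₗ[R] P₁) (hh : ∀ x, g (h (g x)) = g x) : Module.Projective R M := by
  have hk : LinearMap.ker π ≤ LinearMap.ker (LinearMap.id - g ∘ₗ h) := by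
    rw [← hg]
    rintro _ ⟨x, rfl⟩
    simp [hh]
  -- `1 - g h` kills `Ker π`, so it descends to a section of `π`
  let s : M →ₗ[R] P₀ := (LinearMap.ker π).liftQ _ hk ∘ₗ (π.quotKerEquivOfSurjective hπ).symm
  have hs : ∀ y, s (π y) = y - g (h y) := by
    intro y
    have : (π.quotKerEquivOfSurjective hπ).symm (π y) = (LinearMap.ker π).mkQ y := by
      rw [LinearEquiv.symm_apply_eq]; rfl
    simp only [s, LinearMap.comp_apply, LinearEquiv.coe_coe, this]
    simp
  refine Module.Projective.of_split s π ?_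
  ext m
  obtain ⟨y, rfl⟩ := hπ m
  have : π (g (h y)) = 0 := by
    rw [← LinearMap.mem_ker, ← hg]; exact ⟨_, rfl⟩
  simp [hs, this]

end Regular

/-! ### Duality for finite free modules -/

section Duality

variable {Λ : Type} [Ring Λ]

/-- The dual of the free left module `Λⁿ` is the free right module of rank `n`; a functional
corresponds to its values on the standard basis. -/
def dualFree (n : ℕ) : ((Fin n → Λ) →ₗ[Λ] Λ) ≃ₗ[Λᵐᵒᵖ] (Fin n → Λᵐᵒᵖ) where
  toFun f i := MulOpposite.op (f (Pi.single i 1))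
  map_add' f g := by ext i; simp
  map_smul' a f := by ext i; simp
  invFun c :=
    { toFun := fun x => ∑ i, x i * (c i).unop
      map_add' := fun x y => by simp [add_mul, Finset.sum_add_distrib]
      map_smul' := fun a x => by simp [Finset.mul_sum, mul_assoc] }
  left_inv f := by
    apply LinearMap.pi_ext'
    intro i
    ext
    simp [Pi.single_apply]
  right_inv c := by
    ext i
    simp [Pi.single_apply]

instance dualFree_projective (n : ℕ) : Module.Projective Λᵐᵒᵖ ((Fin n → Λ) →ₗ[Λ] Λ) :=
  Module.Projective.of_equiv' (dualFree n).symm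

instance dualFree_finite (n : ℕ) : Module.Finite Λᵐᵒᵖ ((Fin n → Λ) →ₗ[Λ] Λ) :=
  Module.Finite.equiv (dualFree n).symm

lemma dual_projective (P : Type) [AddCommGroup P] [Module Λ P] [Module.Finite Λ P]
    [Module.Projective Λ P] : Module.Projective Λᵐᵒᵖ (P →ₗ[Λ] Λ) := by
  obtain ⟨n, f, hf⟩ := Module.Finite.exists_fin' Λ P
  obtain ⟨s, hs⟩ := Module.projective_lifting_property f LinearMap.id hf
  refine Module.Projective.of_split (dualMap f) (dualMap s) ?_
  ext φ x
  exact congrArg φ (LinearMap.congr_fun hs x)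

/-- Duality is full on maps into finite free modules. -/
lemma exists_eq_dualMap {P : Type} [AddCommGroup P] [Module Λ P] {m : ℕ}
    (ψ : ((Fin m → Λ) →ₗ[Λ] Λ) →ₗ[Λᵐᵒᵖ] (P →ₗ[Λ] Λ)) :
    ∃ g : P →ₗ[Λ] (Fin m → Λ), ψ = dualMap g := by
  refine ⟨LinearMap.pi fun i => ψ (LinearMap.proj i), ?_⟩
  ext f x
  have hf : f = ∑ i, MulOpposite.op (f (Pi.single i 1)) • LinearMap.proj i := by
    apply LinearMap.pi_ext'
    intro i
    ext
    simp [Pi.single_apply]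
  rw [hf, map_sum, map_sum, LinearMap.sum_apply, LinearMap.sum_apply]
  refine Finset.sum_congr rfl fun i _ => ?_
  rw [map_smul]
  rfl

/-- Duality is faithful on maps into finite free modules. -/
lemma dualMap_injective {P : Type} [AddCommGroup P] [Module Λ P] {m : ℕ}
    {g g' : P →ₗ[Λ] (Fin m → Λ)} (h : dualMap g = dualMap g') : g = g' := by
  ext x i
  exact LinearMap.congr_fun (LinearMap.congr_fun h (LinearMap.proj i)) x

end Duality

/-! ### The transpose -/

section Transpose

variable {Λ : Type} [Ring Λ]

/-- The map on transposes induced by a map of presentations given in the square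
`f₀ g = g' f₁`. -/
def trMap {M M' : Type} [AddCommGroup M] [Module Λ M] [AddCommGroup M'] [Module Λ M']
    (p : Presentation Λ M) (q : Presentation Λ M')
    (f₁ : p.P₁ →ₗ[Λ] q.P₁) (f₀ : p.P₀ →ₗ[Λ] q.P₀) (h : ∀ x, f₀ (p.g x) = q.g (f₁ x)) :
    q.Tr →ₗ[Λᵐᵒᵖ] p.Tr :=
  Submodule.mapQ _ _ (dualMap f₁) (by
    rintro _ ⟨φ, rfl⟩
    refine ⟨φ ∘ₗ f₀, ?_⟩
    ext x
    exact congrArg φ (h x))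

lemma exists_lift {M : Type} [AddCommGroup M] [Module Λ M] (p q : Presentation Λ M) :
    ∃ (f₁ : p.P₁ →ₗ[Λ] q.P₁) (f₀ : p.P₀ →ₗ[Λ] q.P₀),
      (∀ x, q.π (f₀ x) = p.π x) ∧ ∀ x, f₀ (p.g x) = q.g (f₁ x) := by
  obtain ⟨f₀, h₀⟩ := Module.projective_lifting_property q.π p.π q.surj
  have h₀' : ∀ x, q.π (f₀ x) = p.π x := fun x => LinearMap.congr_fun h₀ x
  have hp : ∀ x, p.π (p.g x) = 0 := fun x => by
    rw [← LinearMap.mem_ker, ← p.exact]; exact ⟨x, rfl⟩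
  obtain ⟨f₁, h₁⟩ := Module.projective_lifting_property q.g.rangeRestrict
    ((f₀ ∘ₗ p.g).codRestrict (LinearMap.range q.g) (fun x => by
      rw [q.exact]; simp [h₀', hp])) q.g.surjective_rangeRestrict
  exact ⟨f₁, f₀, h₀', fun x => (congrArg Subtype.val (LinearMap.congr_fun h₁ x)).symm⟩

/-- For `j ≥ 1`, vanishing of `Ext^j(Tr M, Λ)` does not depend on the presentation of `M`. -/
lemma ext_Tr_of_presentation {M : Type} [AddCommGroup M] [Module Λ M] (p q : Presentation Λ M)
    (j : ℕ) (hj : 1 ≤ j)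
    (hq : Subsingleton (extGrp Λᵐᵒᵖ j (ModuleCat.of Λᵐᵒᵖ q.Tr) (ModuleCat.of Λᵐᵒᵖ Λ))) :
    Subsingleton (extGrp Λᵐᵒᵖ j (ModuleCat.of Λᵐᵒᵖ p.Tr) (ModuleCat.of Λᵐᵒᵖ Λ)) := by
  obtain ⟨a₁, a₀, ha, ha'⟩ := exists_lift p q
  obtain ⟨b₁, b₀, hb, hb'⟩ := exists_lift q p
  -- `1 - b₀ a₀` has image in `Ker p.π`, which gives a homotopy `s`
  obtain ⟨s, hs⟩ := Module.projective_lifting_property p.g.rangeRestrict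
    ((LinearMap.id - b₀ ∘ₗ a₀).codRestrict (LinearMap.range p.g) (fun x => by
      rw [p.exact]; simp [ha, hb])) p.g.surjective_rangeRestrict
  have hs' : ∀ x, p.g (s x) = x - b₀ (a₀ x) :=
    fun x => congrArg Subtype.val (LinearMap.congr_fun hs x)
  -- the remaining error of the homotopy in degree one maps into `Ker p.g`
  let t : p.P₁ →ₗ[Λ] p.P₁ := LinearMap.id - b₁ ∘ₗ a₁ - s ∘ₗ p.g
  have ht : ∀ x, p.g (t x) = 0 := by
    intro x
    simp [t, hs', ← hb', ← ha']
  have hP : Module.Projective Λᵐᵒᵖ (p.P₁ →ₗ[Λ] Λ) := dual_projective _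
  -- the dual of `t` vanishes on `Im p.g*`, so it is defined on `Tr`
  let c : p.Tr →ₗ[Λᵐᵒᵖ] (p.P₁ →ₗ[Λ] Λ) := Submodule.liftQ _ (dualMap t) (by
    rintro _ ⟨φ, rfl⟩
    ext x
    change φ (p.g (t x)) = 0
    rw [ht, map_zero])
  refine subsingleton_ext_of_factor j hj (trMap q p b₁ b₀ hb') (trMap p q a₁ a₀ ha') c
    (Submodule.mkQ _) ?_ hq
  intro x
  obtain ⟨φ, rfl⟩ := Submodule.mkQ_surjective _ x
  change Submodule.mkQ _ (dualMap a₁ (dualMap b₁ φ)) + Submodule.mkQ _ (dualMap t φ) = _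
  rw [← map_add, ← sub_eq_zero, ← map_sub, ← LinearMap.mem_ker, Submodule.ker_mkQ]
  refine ⟨-(φ ∘ₗ s), ?_⟩
  ext x
  change -φ (s (p.g x)) = φ (b₁ (a₁ x)) + φ (x - b₁ (a₁ x) - s (p.g x)) - φ x
  simp only [map_sub]
  abel

/-- The finite free presentation of the cokernel of a matrix. -/
def cokerPresentation {n m : ℕ} (g : (Fin n → Λ) →ₗ[Λ] (Fin m → Λ)) :
    Presentation Λ ((Fin m → Λ) ⧸ LinearMap.range g) where
  P₁ := Fin n → Λ
  P₀ := Fin m → Λ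
  g := g
  π := Submodule.mkQ _
  surj := Submodule.mkQ_surjective _
  exact := (Submodule.ker_mkQ _).symm

/-- Every finitely generated right module is the transpose of the cokernel of a matrix. -/
lemma exists_presentation_Tr [IsNoetherianRing Λᵐᵒᵖ] (N : Type) [AddCommGroup N]
    [Module Λᵐᵒᵖ N] [Module.Finite Λᵐᵒᵖ N] :
    ∃ (n m : ℕ) (g : (Fin n → Λ) →ₗ[Λ] (Fin m → Λ)),
      Nonempty ((cokerPresentation g).Tr ≃ₗ[Λᵐᵒᵖ] N) := by
  obtain ⟨n, f, hf⟩ := Module.Finite.exists_fin' Λᵐᵒᵖ N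
  let φ : ((Fin n → Λ) →ₗ[Λ] Λ) →ₗ[Λᵐᵒᵖ] N := f ∘ₗ (dualFree n).toLinearMap
  have hφ : Function.Surjective φ := hf.comp (dualFree n).surjective
  have : IsNoetherian Λᵐᵒᵖ ((Fin n → Λ) →ₗ[Λ] Λ) := isNoetherian_of_isNoetherianRing_of_finite _ _
  obtain ⟨m, k, hk⟩ := Module.Finite.exists_fin' Λᵐᵒᵖ (LinearMap.ker φ)
  obtain ⟨g, hg⟩ := exists_eq_dualMap
    ((LinearMap.ker φ).subtype ∘ₗ k ∘ₗ (dualFree (Λ := Λ) m).toLinearMap)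
  have hr : LinearMap.range (dualMap g) = LinearMap.ker φ := by
    rw [← hg, LinearMap.range_comp_of_range_eq_top, Submodule.range_subtype]
    exact LinearMap.range_eq_top.2 (hk.comp (dualFree m).surjective)
  exact ⟨n, m, g, ⟨(Submodule.quotEquivOfEq _ _ hr).trans (φ.quotKerEquivOfSurjective hφ)⟩⟩

/-- Every finitely generated left module has a presentation by finite free modules. -/
lemma exists_free_presentation [IsNoetherianRing Λ] (M : Type) [AddCommGroup M]
    [Module Λ M] [Module.Finite Λ M] :
    ∃ (n m : ℕ) (g : (Fin n → Λ) →ₗ[Λ] (Fin m → Λ)) (π : (Fin m → Λ) →ₗ[Λ] M),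
      Function.Surjective π ∧ LinearMap.range g = LinearMap.ker π := by
  obtain ⟨m, π, hπ⟩ := Module.Finite.exists_fin' Λ M
  obtain ⟨n, k, hk⟩ := Module.Finite.exists_fin' Λ (LinearMap.ker π)
  refine ⟨n, m, (LinearMap.ker π).subtype ∘ₗ k, π, hπ, ?_⟩
  rw [LinearMap.range_comp_of_range_eq_top _ (LinearMap.range_eq_top.2 hk),
    Submodule.range_subtype]

end Transpose

end AuslanderTranspose

open AuslanderTranspose

/-- Every `k`-torsionfree f.g. left module is projective iff every f.g. right module
with reduced grade at least `k + 1` is projective. -/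
theorem stmt_18 (Λ : Type) [Ring Λ] [IsNoetherianRing Λ] [IsNoetherianRing Λᵐᵒᵖ] (k : ℕ) (hk : 1 ≤ k) :
    (∀ (M : Type) [AddCommGroup M] [Module Λ M] [Module.Finite Λ M],
        KTorsionfree Λ k M → Module.Projective Λ M) ↔
    (∀ (N : Type) [AddCommGroup N] [Module Λᵐᵒᵖ N] [Module.Finite Λᵐᵒᵖ N],
        (∀ j, 1 ≤ j → j ≤ k →
          Subsingleton (extGrp Λᵐᵒᵖ j (ModuleCat.of Λᵐᵒᵖ N) (ModuleCat.of Λᵐᵒᵖ Λ))) →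
        Module.Projective Λᵐᵒᵖ N) := by
  constructor
  · intro H N _ _ _ hN
    obtain ⟨n, m, g, ⟨e⟩⟩ := exists_presentation_Tr (Λ := Λ) N
    have hM : Module.Projective Λ ((Fin m → Λ) ⧸ LinearMap.range g) := by
      refine H _ fun pr j hj hjk => ext_Tr_of_presentation pr (cokerPresentation g) j hj ?_
      refine subsingleton_ext_of_factor j hj e.toLinearMap e.symm.toLinearMap
        (0 : _ →ₗ[Λᵐᵒᵖ] PUnit.{1}) 0 (fun x => ?_) (hN j hj hjk)
      simp
    obtain ⟨h, hh⟩ := exists_regular_of_projective g (Submodule.mkQ _)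
      (Submodule.mkQ_surjective _) (Submodule.ker_mkQ _).symm
    have hTr : Module.Projective Λᵐᵒᵖ (cokerPresentation g).Tr := by
      refine projective_of_regular (P₀ := (Fin n → Λ) →ₗ[Λ] Λ) (dualMap g) (Submodule.mkQ _)
        (Submodule.mkQ_surjective _) (Submodule.ker_mkQ _).symm (dualMap h) fun φ => ?_
      apply LinearMap.ext
      intro x
      exact congrArg φ (hh x)
    exact Module.Projective.of_equiv' e
  · intro H M _ _ _ hM
    obtain ⟨n, m, g, π, hπ, hg⟩ := exists_free_presentation (Λ := Λ) M
    let pr : Presentation Λ M :=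
      { P₁ := Fin n → Λ, P₀ := Fin m → Λ, g := g, π := π, surj := hπ, exact := hg }
    have hfin : Module.Finite Λᵐᵒᵖ pr.Tr := by
      have : Module.Finite Λᵐᵒᵖ (pr.P₁ →ₗ[Λ] Λ) := dualFree_finite n
      infer_instance
    have hTr : Module.Projective Λᵐᵒᵖ pr.Tr := H pr.Tr fun j hj hjk => hM pr j hj hjk
    obtain ⟨ψ, hψ⟩ := exists_regular_of_projective (P₀ := (Fin n → Λ) →ₗ[Λ] Λ) (dualMap g)
      (Submodule.mkQ (LinearMap.range (dualMap pr.g)))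
      (Submodule.mkQ_surjective _) (Submodule.ker_mkQ _).symm
    obtain ⟨h, rfl⟩ := exists_eq_dualMap ψ
    refine projective_of_regular g π hπ hg h fun x => ?_
    have : g ∘ₗ h ∘ₗ g = g := dualMap_injective (LinearMap.ext fun φ => hψ φ)
    exact LinearMap.congr_fun this x
end

section
/- Let Λ be a left and right Noetherian ring with global dimension at most k, where k is a positive integer. Then every k-torsionfree finitely generated left Λ-module is projective. In particular, if gl.dim Λ ≤ 2, then every finitely generated reflexive left Λ-module is projective. -/
/-!
A `k`-torsionfree module is a `k`-th syzygy, and over a ring of left global dimension at most `k`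
every `k`-th syzygy is projective.

Write `N* = Hom(N, Λ)`. For a presentation `P₁ → P₀ → M → 0` by finitely generated projectives, the
sequence `0 → M* → P₀* → P₁* → Tr M → 0` is exact. As `P₀` and `P₁` are reflexive, `Ext¹(Tr M, Λ) = 0`
makes the evaluation `M → M**` injective and `Ext²(Tr M, Λ) = 0` then makes it surjective
(`Presentation.evalL_injective`, `Presentation.evalL_surjective`); moreover
`Extⁱ(M*, Λ) = Extⁱ⁺²(Tr M, Λ)` for `i ≥ 1` (`Presentation.extZero_dual`). Dualizing a projective
resolution of a finitely generated right module `N` with `Extⁱ(N, Λ) = 0` for `1 ≤ i ≤ j` exhibits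
`N*` as a `(j + 2)`-nd syzygy (`dualR_isSyzygy`). With `N = M*` and `j = k - 2`, this makes `M ≅ M**`
a `k`-th syzygy if `k ≥ 2`; if `k = 1`, then `M` embeds in `M**` and hence in a projective module.
A reflexive module is the case `j = 0`, with no condition on the transpose. Finally,
`IsSyzygy.projective` lowers the projective dimension along the syzygies.
-/

open CategoryTheory

/-! ### Vanishing of Ext and global dimension -/

/-- Vanishing of `Ext` as a left derived functor gives vanishing of `Ext` in the derived category:
both are computed by the cochains of a projective resolution. The derived-category version has the
long exact sequences used below. -/
theorem ext_vanish {A : Type} [Ring A] {n : ℕ} {X Y : ModuleCat.{0} A}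
    (h : Subsingleton (extGrp A (n + 1) X Y)) : Subsingleton (Abelian.Ext.{0} X Y (n + 1)) := by
  let R : ProjectiveResolution X := ProjectiveResolution.of X
  have hz : Limits.IsZero ((R.complex.linearYonedaObj ℤ Y).homology (n + 1)) :=
    Limits.IsZero.of_iso (ModuleCat.isZero_of_subsingleton (extGrp A (n + 1) X Y))
      (R.isoExt (n + 1) Y).symm
  rw [← HomologicalComplex.exactAt_iff_isZero_homology,
    HomologicalComplex.exactAt_iff' _ n (n + 1) (n + 2) (by simp) (by simp),
    ShortComplex.moduleCat_exact_iff] at hz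
  refine subsingleton_of_forall_eq 0 fun α ↦ ?_
  obtain ⟨f, hf, rfl⟩ := R.extMk_surjective α (n + 2) rfl
  rw [R.extMk_eq_zero_iff f (n + 2) rfl hf n rfl]
  exact hz f hf

/-- If `Ext` vanishes identically in one positive degree, it does so in all larger degrees, by
dimension shifting in the first variable. -/
theorem ext_vanish_of_ge {A : Type} [Ring A] {n : ℕ}
    (h : ∀ X Y : ModuleCat.{0} A, Subsingleton (Abelian.Ext.{0} X Y (n + 1))) (m : ℕ)
    (X Y : ModuleCat.{0} A) : Subsingleton (Abelian.Ext.{0} X Y (n + 1 + m)) := by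
  induction m generalizing X with
  | zero => exact h X Y
  | succ m ih =>
    refine subsingleton_of_forall_eq 0 fun α ↦ ?_
    let S := ShortComplex.mk (Limits.kernel.ι (Projective.π X)) (Projective.π X) (by simp)
    have hS : S.ShortExact := { exact := ShortComplex.exact_kernel _ }
    have : Projective S.X₂ := inferInstanceAs (Projective (Projective.over X))
    obtain ⟨β, rfl⟩ := Abelian.Ext.contravariant_sequence_exact₃ hS Y (n₁ := n + 1 + m + 1) α
      (Abelian.Ext.eq_zero_of_projective _) (n₀ := n + 1 + m) (by lia)
    have := ih S.X₁
    rw [Subsingleton.elim β 0, Abelian.Ext.comp_zero]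

theorem hasProjectiveDimensionLT_of_gldim {A : Type} [Ring A] {n : ℕ}
    (h : ∀ X Y : ModuleCat.{0} A, Subsingleton (extGrp A (n + 1) X Y)) (X : ModuleCat.{0} A) :
    HasProjectiveDimensionLT X (n + 1) := by
  refine HasProjectiveDimensionLT.mk fun i hi Y e ↦ ?_
  obtain ⟨m, rfl⟩ := Nat.exists_eq_add_of_le hi
  have := ext_vanish_of_ge (fun X Y ↦ ext_vanish (h X Y)) m X Y
  exact Subsingleton.elim _ _

/-! ### Syzygies and dimension shifting -/

section Syzygy

variable {A : Type} [Ring A]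

/-- `IsSyzygy A n M` says that `M` is an `n`-th syzygy: there is an exact sequence
`0 → M → P₁ → ⋯ → Pₙ` with every `Pᵢ` projective. It is encoded by splitting off one short
exact sequence `0 → M → P → C → 0` at a time. -/
inductive IsSyzygy (A : Type) [Ring A] : ℕ → ∀ (M : Type) [AddCommGroup M] [Module A M], Prop
  | zero (M : Type) [AddCommGroup M] [Module A M] : IsSyzygy A 0 M
  | succ (n : ℕ) (M P C : Type) [AddCommGroup M] [Module A M] [AddCommGroup P] [Module A P]
      [AddCommGroup C] [Module A C] [Module.Projective A P] (f : M →ₗ[A] P) (g : P →ₗ[A] C)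
      (hf : Function.Injective f) (hfg : Function.Exact f g) (hg : Function.Surjective g)
      (h : IsSyzygy A n C) : IsSyzygy A (n + 1) M

theorem IsSyzygy.of_equiv {n : ℕ} {M N : Type} [AddCommGroup M] [Module A M] [AddCommGroup N]
    [Module A N] (e : M ≃ₗ[A] N) (h : IsSyzygy A n N) : IsSyzygy A n M := by
  cases h with
  | zero => exact .zero M
  | succ n _ P C f g hf hfg hg h =>
    refine .succ n M P C (f ∘ₗ e.toLinearMap) g (hf.comp e.injective) (fun p ↦ ?_) hg h
    rw [hfg p]
    simp [e.surjective.range_comp]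

/-- A module embedding in an `(n + 1)`-st syzygy embeds in a projective module. -/
theorem IsSyzygy.one_of_injective {n : ℕ} {M N : Type} [AddCommGroup M] [Module A M]
    [AddCommGroup N] [Module A N] (e : M →ₗ[A] N) (he : Function.Injective e)
    (h : IsSyzygy A (n + 1) N) : IsSyzygy A 1 M := by
  cases h with
  | succ n _ P C f g hf hfg hg h =>
    exact .succ 0 M P _ (f ∘ₗ e) (LinearMap.range (f ∘ₗ e)).mkQ (hf.comp he)
      (LinearMap.exact_map_mkQ_range _) (Submodule.mkQ_surjective _) (.zero _)

variable {M P C : Type} [AddCommGroup M] [Module A M] [AddCommGroup P] [Module A P]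
  [AddCommGroup C] [Module A C] {f : M →ₗ[A] P} {g : P →ₗ[A] C}

theorem shortExact_moduleCat (hf : Function.Injective f) (hfg : Function.Exact f g)
    (hg : Function.Surjective g) :
    (ShortComplex.mk (ModuleCat.ofHom f) (ModuleCat.ofHom g)
      (by ext x; exact hfg.apply_apply_eq_zero x)).ShortExact :=
  ModuleCat.shortComplex_shortExact _ hfg hf hg

theorem projective_moduleCat (P : Type) [AddCommGroup P] [Module A P] [Module.Projective A P] :
    Projective (ModuleCat.of A P) :=
  (IsProjective.iff_projective P).1 inferInstance

theorem IsSyzygy.hasProjectiveDimensionLT {n : ℕ} {M : Type} [AddCommGroup M]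
    [Module A M] (h : IsSyzygy A n M) (m : ℕ)
    (hd : ∀ X : ModuleCat.{0} A, HasProjectiveDimensionLT X (m + 1 + n)) :
    HasProjectiveDimensionLT (ModuleCat.of A M) (m + 1) := by
  induction h generalizing m with
  | zero M => exact hd _
  | succ n M P C f g hf hfg hg h ih =>
    have h3 := ih (m + 1) fun X ↦ by
      have := hd X
      rwa [show m + 1 + (n + 1) = m + 1 + 1 + n by lia] at this
    have := projective_moduleCat (A := A) P
    have := hasProjectiveDimensionLT_of_ge (ModuleCat.of A P) 1 (m + 1) (by lia)
    exact (shortExact_moduleCat hf hfg hg).hasProjectiveDimensionLT_X₁ (m + 1) this h3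

/-- If the left global dimension is at most `k`, then `k`-th syzygies are projective: each of the
`k` short exact sequences lowers the bound on the projective dimension by one. -/
theorem IsSyzygy.projective {k : ℕ} {M : Type} [AddCommGroup M] [Module A M]
    (h : IsSyzygy A k M)
    (hgl : ∀ X Y : ModuleCat.{0} A, Subsingleton (extGrp A (k + 1) X Y)) :
    Module.Projective A M := by
  have := h.hasProjectiveDimensionLT 0 fun X ↦ by
    have := hasProjectiveDimensionLT_of_gldim hgl X
    rwa [show 0 + 1 + k = k + 1 by lia]
  exact (IsProjective.iff_projective M).2 (projective_iff_hasProjectiveDimensionLT_one.2 this)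

/-- `Extⁱ(M, L) = 0`, with `Ext` computed in the derived category of `A`-modules. -/
abbrev ExtZero (A : Type) [Ring A] (i : ℕ) (M L : Type) [AddCommGroup M] [Module A M]
    [AddCommGroup L] [Module A L] : Prop :=
  Subsingleton (Abelian.Ext.{0} (ModuleCat.of A M) (ModuleCat.of A L) i)

variable {L : Type} [AddCommGroup L] [Module A L]

/-- If `Ext¹(C, L) = 0` for `0 → M → P → C → 0` exact, then maps `M → L` extend to `P`. -/
theorem exists_extension (hf : Function.Injective f) (hfg : Function.Exact f g)
    (hg : Function.Surjective g) (h : ExtZero A 1 C L) (φ : M →ₗ[A] L) :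
    ∃ ψ : P →ₗ[A] L, ψ ∘ₗ f = φ := by
  have hS := shortExact_moduleCat hf hfg hg
  obtain ⟨x, hx⟩ := Abelian.Ext.contravariant_sequence_exact₁ hS (ModuleCat.of A L) (n₀ := 0)
    (Abelian.Ext.mk₀ (ModuleCat.ofHom φ)) (n₁ := 1) rfl (h.elim _ _)
  obtain ⟨ψ, rfl⟩ := Abelian.Ext.homEquiv₀.symm.surjective x
  refine ⟨ψ.hom, ?_⟩
  have := Abelian.Ext.homEquiv₀.symm.injective
    (a₁ := ModuleCat.ofHom f ≫ ψ) (a₂ := ModuleCat.ofHom φ) (by simpa using hx)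
  exact congrArg ModuleCat.Hom.hom this

/-- Dimension shifting along `0 → M → P → C → 0` with `P` projective. -/
theorem extZero_of_succ [Module.Projective A P] (hf : Function.Injective f)
    (hfg : Function.Exact f g) (hg : Function.Surjective g) {i : ℕ}
    (h : ExtZero A (i + 2) C L) : ExtZero A (i + 1) M L := by
  have hS := shortExact_moduleCat hf hfg hg
  refine subsingleton_of_forall_eq 0 fun α ↦ ?_
  obtain ⟨x, rfl⟩ := Abelian.Ext.contravariant_sequence_exact₁ hS (ModuleCat.of A L) (n₀ := i + 1)
    α (n₁ := i + 2) (by lia) (h.elim _ _)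
  have := projective_moduleCat (A := A) P
  rw [Abelian.Ext.eq_zero_of_projective x, Abelian.Ext.comp_zero]

end Syzygy

/-! ### Duals of finitely generated projective modules -/

/-- Dual basis of a finitely generated projective module; no commutativity is assumed. -/
theorem exists_dualBasis (A P : Type) [Ring A] [AddCommGroup P] [Module A P]
    [Module.Finite A P] [Module.Projective A P] :
    ∃ (n : ℕ) (x : Fin n → P) (f : Fin n → P →ₗ[A] A), ∀ p, ∑ i, f i p • x i = p := by
  obtain ⟨n, r, s, -, -, h⟩ := Module.Finite.exists_comp_eq_id_of_projective A P
  refine ⟨n, fun i ↦ r (Pi.single i 1), fun i ↦ LinearMap.proj i ∘ₗ s, fun p ↦ ?_⟩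
  have := LinearMap.congr_fun h p
  simp only [LinearMap.comp_apply, LinearMap.id_apply] at this
  conv_rhs => rw [← this, LinearMap.pi_apply_eq_sum_univ r (s p)]
  refine Finset.sum_congr rfl fun i _ ↦ ?_
  exact congrArg (fun v ↦ s p i • r v) (funext fun j ↦ by simp [Pi.single_apply, eq_comm])

theorem finite_projective_of_dualBasis {A P : Type} [Ring A] [AddCommGroup P] [Module A P]
    {n : ℕ} (x : Fin n → P) (f : Fin n → P →ₗ[A] A) (h : ∀ p, ∑ i, f i p • x i = p) :
    Module.Finite A P ∧ Module.Projective A P := by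
  have hc : Fintype.linearCombination A x ∘ₗ LinearMap.pi f = LinearMap.id := by
    refine LinearMap.ext fun p ↦ ?_
    simpa [Fintype.linearCombination_apply] using h p
  exact ⟨Module.Finite.of_surjective (Fintype.linearCombination A x)
    fun p ↦ ⟨_, LinearMap.congr_fun hc p⟩, Module.Projective.of_split _ _ hc⟩

section
variable {Λ : Type} [Ring Λ]

/-- Finitely generated projective modules are reflexive. With a dual basis `(xᵢ, fᵢ)`, the
functional `φ` on the dual is evaluation at `∑ φ(fᵢ) xᵢ`. -/
theorem evalL_bijective (P : Type) [AddCommGroup P] [Module Λ P] [Module.Finite Λ P]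
    [Module.Projective Λ P] : Function.Bijective (evalL Λ P) := by
  obtain ⟨n, x, f, h⟩ := exists_dualBasis Λ P
  refine ⟨(injective_iff_map_eq_zero _).2 fun p hp ↦ ?_, fun φ ↦ ⟨∑ i, φ (f i) • x i, ?_⟩⟩
  · rw [← h p]
    exact Finset.sum_eq_zero fun i _ ↦ by
      rw [show f i p = 0 from LinearMap.congr_fun hp (f i), zero_smul]
  · ext g
    have hg : g = ∑ i, MulOpposite.op (g (x i)) • f i := by
      ext p
      conv_lhs => rw [← h p]
      simp [map_sum]
    conv_rhs => rw [hg]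
    change g (∑ i, φ (f i) • x i) = _
    simp [map_sum]

theorem dual_finite_projective (P : Type) [AddCommGroup P] [Module Λ P] [Module.Finite Λ P]
    [Module.Projective Λ P] :
    Module.Finite Λᵐᵒᵖ (P →ₗ[Λ] Λ) ∧ Module.Projective Λᵐᵒᵖ (P →ₗ[Λ] Λ) := by
  obtain ⟨n, x, f, h⟩ := exists_dualBasis Λ P
  refine finite_projective_of_dualBasis f (fun i ↦
    { toFun := fun g ↦ MulOpposite.op (g (x i))
      map_add' := fun _ _ ↦ rfl
      map_smul' := fun _ _ ↦ rfl }) fun g ↦ ?_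
  ext p
  conv_rhs => rw [← h p]
  simp [map_sum]

theorem dualR_projective (Q : Type) [AddCommGroup Q] [Module Λᵐᵒᵖ Q] [Module.Finite Λᵐᵒᵖ Q]
    [Module.Projective Λᵐᵒᵖ Q] : Module.Projective Λ (Q →ₗ[Λᵐᵒᵖ] Λ) := by
  obtain ⟨n, x, f, h⟩ := exists_dualBasis Λᵐᵒᵖ Q
  -- The dual basis takes values in `Λᵐᵒᵖ`, whereas the dual is formed with values in `Λ`.
  let f' : Fin n → Q →ₗ[Λᵐᵒᵖ] Λ := fun i ↦
    { toFun := fun q ↦ (f i q).unop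
      map_add' := fun _ _ ↦ by simp
      map_smul' := fun _ _ ↦ by simp }
  refine (finite_projective_of_dualBasis f' (fun i ↦
    { toFun := fun g ↦ g (x i)
      map_add' := fun _ _ ↦ rfl
      map_smul' := fun _ _ ↦ rfl }) fun g ↦ ?_).2
  ext p
  conv_rhs => rw [← h p]
  simp [map_sum, f']
end

/-! ### Duals and higher syzygies -/

section Main

variable {Λ : Type} [Ring Λ]

/-- A map killing the kernel of a surjection `q` factors through `q`. -/
theorem exists_factor_s19 {A F N L : Type} [Ring A] [AddCommGroup F] [Module A F] [AddCommGroup N]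
    [Module A N] [AddCommGroup L] [Module A L] (q : F →ₗ[A] N) (hq : Function.Surjective q)
    (φ : F →ₗ[A] L) (hk : LinearMap.ker q ≤ LinearMap.ker φ) : ∃ ψ : N →ₗ[A] L, ψ ∘ₗ q = φ := by
  refine ⟨(LinearMap.ker q).liftQ φ hk ∘ₗ (q.quotKerEquivOfSurjective hq).symm.toLinearMap,
    LinearMap.ext fun x ↦ ?_⟩
  have : (q.quotKerEquivOfSurjective hq).symm (q x) = Submodule.Quotient.mk x := by
    rw [LinearEquiv.symm_apply_eq]; rfl
  simp [this]

/-- If `Ext¹(coker d, L) = 0`, every map killing `ker d` factors through `d : F → G`: it factors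
through `im d`, and maps on `im d` extend to `G`. -/
theorem exists_factor_of_extZero {A F G L : Type} [Ring A] [AddCommGroup F] [Module A F]
    [AddCommGroup G] [Module A G] [AddCommGroup L] [Module A L] (d : F →ₗ[A] G)
    (h : ExtZero A 1 (G ⧸ LinearMap.range d) L) (φ : F →ₗ[A] L)
    (hk : LinearMap.ker d ≤ LinearMap.ker φ) : ∃ ψ : G →ₗ[A] L, ψ ∘ₗ d = φ := by
  obtain ⟨χ, rfl⟩ := exists_factor_s19 d.rangeRestrict d.surjective_rangeRestrict φ
    (by rwa [LinearMap.ker_rangeRestrict])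
  obtain ⟨ψ, rfl⟩ := exists_extension (Submodule.injective_subtype _)
    (LinearMap.exact_subtype_mkQ (LinearMap.range d)) (Submodule.mkQ_surjective _) h χ
  exact ⟨ψ, rfl⟩

theorem dualMapR_injective {F N : Type} [AddCommGroup F] [Module Λᵐᵒᵖ F]
    [AddCommGroup N] [Module Λᵐᵒᵖ N] (q : F →ₗ[Λᵐᵒᵖ] N) (hq : Function.Surjective q) :
    Function.Injective (dualMapR q) :=
  fun _ _ h ↦ LinearMap.ext <| hq.forall.2 fun x ↦ LinearMap.congr_fun h x

theorem dualMapR_exact {K F N : Type} [AddCommGroup K] [Module Λᵐᵒᵖ K] [AddCommGroup F]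
    [Module Λᵐᵒᵖ F] [AddCommGroup N] [Module Λᵐᵒᵖ N] (i : K →ₗ[Λᵐᵒᵖ] F) (q : F →ₗ[Λᵐᵒᵖ] N)
    (hq : Function.Surjective q) (hiq : Function.Exact i q) :
    Function.Exact (dualMapR q) (dualMapR i) := by
  refine fun φ ↦ ⟨fun h ↦ ?_, ?_⟩
  · refine exists_factor_s19 q hq φ fun x hx ↦ ?_
    obtain ⟨y, rfl⟩ := (hiq x).1 hx
    exact LinearMap.congr_fun h y
  · rintro ⟨ψ, rfl⟩
    refine LinearMap.ext fun x ↦ ?_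
    change ψ (q (i x)) = 0
    rw [hiq.apply_apply_eq_zero, map_zero]

theorem dualMap_injective {F N : Type} [AddCommGroup F] [Module Λ F]
    [AddCommGroup N] [Module Λ N] (q : F →ₗ[Λ] N) (hq : Function.Surjective q) :
    Function.Injective (dualMap q) :=
  fun _ _ h ↦ LinearMap.ext <| hq.forall.2 fun x ↦ LinearMap.congr_fun h x

theorem dualMap_exact {K F N : Type} [AddCommGroup K] [Module Λ K] [AddCommGroup F]
    [Module Λ F] [AddCommGroup N] [Module Λ N] (i : K →ₗ[Λ] F) (q : F →ₗ[Λ] N)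
    (hq : Function.Surjective q) (hiq : Function.Exact i q) :
    Function.Exact (dualMap q) (dualMap i) := by
  refine fun φ ↦ ⟨fun h ↦ ?_, ?_⟩
  · refine exists_factor_s19 q hq φ fun x hx ↦ ?_
    obtain ⟨y, rfl⟩ := (hiq x).1 hx
    exact LinearMap.congr_fun h y
  · rintro ⟨ψ, rfl⟩
    refine LinearMap.ext fun x ↦ ?_
    change ψ (q (i x)) = 0
    rw [hiq.apply_apply_eq_zero, map_zero]

/-- If `Extⁱ(N, Λ) = 0` for `1 ≤ i ≤ j`, the dual of the right module `N` is a `(j + 2)`-nd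
syzygy. For `j = 0` this is the dual `0 → N* → F₀* → F₁*` of a presentation. In general, `Ext¹(N, Λ) = 0`
makes the dual `0 → N* → F* → K* → 0` of `0 → K → F → N → 0` exact, and `K` inherits the vanishing
in one degree less. -/
theorem dualR_isSyzygy [IsNoetherianRing Λᵐᵒᵖ] (j : ℕ) (N : Type) [AddCommGroup N]
    [Module Λᵐᵒᵖ N] [Module.Finite Λᵐᵒᵖ N] (h : ∀ i < j, ExtZero Λᵐᵒᵖ (i + 1) N Λ) :
    IsSyzygy Λ (j + 2) (N →ₗ[Λᵐᵒᵖ] Λ) := by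
  induction j generalizing N with
  | zero =>
    obtain ⟨n, q, hq⟩ := Module.Finite.exists_fin' Λᵐᵒᵖ N
    obtain ⟨m, p, hp⟩ := Module.Finite.exists_fin' Λᵐᵒᵖ (LinearMap.ker q)
    have hpq : Function.Exact ((LinearMap.ker q).subtype ∘ₗ p) q := fun x ↦ by
      simp [hp.range_comp]
    have := dualR_projective (Λ := Λ) (Fin n → Λᵐᵒᵖ)
    have := dualR_projective (Λ := Λ) (Fin m → Λᵐᵒᵖ)
    let d := dualMapR ((LinearMap.ker q).subtype ∘ₗ p)
    -- Split `0 → N* → F₀* → F₁*` at the image of `d : F₀* → F₁*`.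
    refine .succ 1 _ _ (LinearMap.range d) (dualMapR q) d.rangeRestrict (dualMapR_injective q hq)
      (fun φ ↦ ?_) d.surjective_rangeRestrict ?_
    · rw [← dualMapR_exact _ q hq hpq φ, ← Subtype.coe_inj]; rfl
    · exact .succ 0 _ _ _ (LinearMap.range d).subtype (LinearMap.range d).mkQ
        (Submodule.injective_subtype _) (LinearMap.exact_subtype_mkQ _)
        (Submodule.mkQ_surjective _) (.zero _)
  | succ j ih =>
    obtain ⟨n, q, hq⟩ := Module.Finite.exists_fin' Λᵐᵒᵖ N
    have hqe := LinearMap.exact_subtype_ker_map q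
    have hi := Submodule.injective_subtype (LinearMap.ker q)
    have := dualR_projective (Λ := Λ) (Fin n → Λᵐᵒᵖ)
    exact .succ (j + 2) _ _ _ (dualMapR q) (dualMapR (LinearMap.ker q).subtype)
      (dualMapR_injective q hq) (dualMapR_exact _ q hq hqe)
      (exists_extension hi hqe hq (h 0 (by lia)))
      (ih _ fun i hij ↦ extZero_of_succ hi hqe hq (h (i + 1) (by lia)))

/-! ### The transpose and the evaluation map -/

theorem nonempty_presentation [IsNoetherianRing Λ] (M : Type) [AddCommGroup M] [Module Λ M]
    [Module.Finite Λ M] : Nonempty (Presentation Λ M) := by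
  obtain ⟨n, q, hq⟩ := Module.Finite.exists_fin' Λ M
  obtain ⟨m, p, hp⟩ := Module.Finite.exists_fin' Λ (LinearMap.ker q)
  exact ⟨{ P₁ := Fin m → Λ, P₀ := Fin n → Λ, g := (LinearMap.ker q).subtype ∘ₗ p, π := q
           surj := hq
           exact := by
            rw [LinearMap.range_comp, LinearMap.range_eq_top.2 hp, Submodule.map_subtype_top] }⟩

theorem dual_finite [IsNoetherianRing Λᵐᵒᵖ] (M : Type) [AddCommGroup M]
    [Module Λ M] [Module.Finite Λ M] : Module.Finite Λᵐᵒᵖ (M →ₗ[Λ] Λ) := by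
  obtain ⟨n, q, hq⟩ := Module.Finite.exists_fin' Λ M
  have := (dual_finite_projective (Λ := Λ) (Fin n → Λ)).1
  exact Module.Finite.of_injective (dualMap q) (dualMap_injective q hq)

namespace Presentation

variable {M : Type} [AddCommGroup M] [Module Λ M] (pr : Presentation Λ M)

theorem function_exact : Function.Exact pr.g pr.π := LinearMap.exact_iff.2 pr.exact.symm

/-- `0 → M* → P₀* → im(P₀* → P₁*) → 0` is exact in the middle. -/
theorem dual_exact : Function.Exact (dualMap pr.π) (dualMap pr.g).rangeRestrict := fun φ ↦ by
  rw [← dualMap_exact pr.g pr.π pr.surj pr.function_exact φ,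
    ← Subtype.coe_inj]
  rfl

/-- If `p ∈ P₀` maps to an `m ∈ M` killed by all functionals, evaluation at `p` kills `M*`, the
kernel of `P₀* → P₁*`. As `Ext¹(Tr M, Λ) = 0`, it then factors through `P₁*`, necessarily as
evaluation at some `q ∈ P₁`, so `p` is the image of `q` and `m = 0`. -/
theorem evalL_injective (h : ExtZero Λᵐᵒᵖ 1 pr.Tr Λ) : Function.Injective (evalL Λ M) := by
  refine (injective_iff_map_eq_zero _).2 fun m hm ↦ ?_
  obtain ⟨p, rfl⟩ := pr.surj m
  have hk : LinearMap.ker (dualMap pr.g) ≤ LinearMap.ker (evalL Λ pr.P₀ p) := by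
    intro φ hφ
    obtain ⟨ψ, rfl⟩ := (dualMap_exact pr.g pr.π pr.surj pr.function_exact φ).1 hφ
    exact LinearMap.congr_fun hm ψ
  obtain ⟨ψ, hψ⟩ := exists_factor_of_extZero (dualMap pr.g) h (evalL Λ pr.P₀ p) hk
  obtain ⟨q, rfl⟩ := (evalL_bijective (Λ := Λ) pr.P₁).2 ψ
  rw [← (evalL_bijective (Λ := Λ) pr.P₀).1 hψ]
  exact pr.function_exact.apply_apply_eq_zero q

theorem extZero_range {i : ℕ} (h : ExtZero Λᵐᵒᵖ (i + 2) pr.Tr Λ) :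
    ExtZero Λᵐᵒᵖ (i + 1) (LinearMap.range (dualMap pr.g)) Λ :=
  have := (dual_finite_projective (Λ := Λ) pr.P₁).2
  extZero_of_succ (Submodule.injective_subtype _)
    (LinearMap.exact_subtype_mkQ (LinearMap.range (dualMap pr.g))) (Submodule.mkQ_surjective _) h

/-- `M*` is a second syzygy of `Tr M`, by `0 → M* → P₀* → P₁* → Tr M → 0`. -/
theorem extZero_dual {i : ℕ} (h : ExtZero Λᵐᵒᵖ (i + 3) pr.Tr Λ) :
    ExtZero Λᵐᵒᵖ (i + 1) (M →ₗ[Λ] Λ) Λ :=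
  have := (dual_finite_projective (Λ := Λ) pr.P₀).2
  extZero_of_succ (dualMap_injective pr.π pr.surj) pr.dual_exact
    (LinearMap.surjective_rangeRestrict _) (pr.extZero_range h)

/-- A functional on `M*` extends to `P₀*`, since `Ext¹(im(P₀* → P₁*), Λ) = Ext²(Tr M, Λ) = 0`,
and is then evaluation at an element of `P₀`. -/
theorem evalL_surjective (h : ExtZero Λᵐᵒᵖ 2 pr.Tr Λ) : Function.Surjective (evalL Λ M) := by
  intro φ
  obtain ⟨ψ, rfl⟩ := exists_extension (dualMap_injective pr.π pr.surj) pr.dual_exact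
    (LinearMap.surjective_rangeRestrict _) (pr.extZero_range h) φ
  obtain ⟨p, rfl⟩ := (evalL_bijective (Λ := Λ) pr.P₀).2 ψ
  exact ⟨pr.π p, rfl⟩

end Presentation

end Main

/-! ### Projectivity of `k`-torsionfree and reflexive modules -/

/-- If `gl.dim Λ ≤ k` then every `k`-torsionfree f.g. left module is projective; in
particular if `gl.dim Λ ≤ 2` then every f.g. reflexive left module is projective. -/
theorem stmt_19 (Λ : Type) [Ring Λ] [IsNoetherianRing Λ] [IsNoetherianRing Λᵐᵒᵖ] (k : ℕ) (hk : 1 ≤ k)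
    (hgl : ∀ M N : ModuleCat Λ, Subsingleton (extGrp Λ (k + 1) M N)) :
    (∀ (M : Type) [AddCommGroup M] [Module Λ M] [Module.Finite Λ M],
        KTorsionfree Λ k M → Module.Projective Λ M) ∧
    ((∀ M N : ModuleCat Λ, Subsingleton (extGrp Λ 3 M N)) →
      ∀ (M : Type) [AddCommGroup M] [Module Λ M] [Module.Finite Λ M],
        Function.Bijective (evalL Λ M) → Module.Projective Λ M) := by
  refine ⟨fun M _ _ _ htf ↦ ?_, fun hgl2 M _ _ _ hM ↦ ?_⟩
  · obtain ⟨pr⟩ := nonempty_presentation (Λ := Λ) M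
    have hTr : ∀ i < k, ExtZero Λᵐᵒᵖ (i + 1) pr.Tr Λ := fun i hi ↦
      ext_vanish (htf pr (i + 1) (by lia) (by lia))
    have hinj := pr.evalL_injective (hTr 0 hk)
    have := dual_finite (Λ := Λ) M
    refine IsSyzygy.projective ?_ hgl
    obtain rfl | ⟨j, rfl⟩ : k = 1 ∨ ∃ j, k = j + 2 := by
      obtain _ | _ | j := k
      · lia
      · exact .inl rfl
      · exact .inr ⟨j, rfl⟩
    · exact (dualR_isSyzygy 0 (M →ₗ[Λ] Λ) (by simp)).one_of_injective _ hinj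
    · refine (dualR_isSyzygy j (M →ₗ[Λ] Λ) fun i hi ↦
        pr.extZero_dual (hTr (i + 2) (by lia))).of_equiv ?_
      exact LinearEquiv.ofBijective _ ⟨hinj, pr.evalL_surjective (hTr 1 (by lia))⟩
  · have := dual_finite (Λ := Λ) M
    exact ((dualR_isSyzygy 0 (M →ₗ[Λ] Λ) (by simp)).of_equiv
      (LinearEquiv.ofBijective _ hM)).projective hgl2
end
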